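/- arXiv:1809.06553 — 8 statements merged into one kernel-verified Lean document; each statement's English description precedes it below -/
import Mathlib

section
/- (Euler expansion formula.) Let d ≥ 1, let φ : ℝᵈ × ℝ → ℝᵈ be twice continuously differentiable (ContDiff ℝ 2), and let w : ℝᵈ × ℝ → ℝᵈ be continuously differentiable and satisfy w(φ(x̂,t), t) = ∂φ/∂t(x̂,t) for all x̂ ∈ ℝᵈ and t ∈ ℝ. Then for every x̂ ∈ ℝᵈ and t₀ ∈ ℝ, the function t ↦ J(x̂,t) = det Dφ_t(x̂) is differentiable at t₀ with derivative J(x̂,t₀) · (div_x w(·,t₀))(φ(x̂,t₀)), where div_x w(·,t₀) is the spatial divergence of the vector field x ↦ w(x,t₀). -/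
/-!
Jacobi's formula in row form: since `det` is multilinear in the rows, the derivative of
`det M(t)` is the sum over `i` of the determinants with row `i` of `M` replaced by row `i` of
`M'`. If `M' = A * M`, the new row `i` is `∑ k, A i k • M k`, so the `i`-th summand is
`A i i * det M`, and the sum is `det M * trace A`; no invertibility of `M` is needed.

For `M t = Dφ_t(x̂)`, the relation `M' = A * M` with `A` the spatial Jacobian matrix of `w` comes
from exchanging `∂_t` and `∂_{x_j}` (symmetry of the second derivative of `φ`) and differentiating
`w(φ(x,t),t) = ∂_t φ(x,t)` in `x` by the chain rule.
-/

open Matrix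

/-- The Jacobian matrix (in the standard basis) of a map `f : ℝᵈ → ℝᵈ` at `x`. -/
noncomputable def Dmat {d : ℕ} (f : (Fin d → ℝ) → (Fin d → ℝ)) (x : Fin d → ℝ) :
    Matrix (Fin d) (Fin d) ℝ :=
  Matrix.of fun i j => fderiv ℝ f x (Pi.single j 1) i

/-- The divergence `∑ i, ∂gᵢ/∂xᵢ (x)` of a vector field `g : ℝᵈ → ℝᵈ` at `x`. -/
noncomputable def vdiv {d : ℕ} (g : (Fin d → ℝ) → (Fin d → ℝ)) (x : Fin d → ℝ) : ℝ :=
  ∑ i, fderiv ℝ g x (Pi.single i 1) i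

/-- Jacobi formula at a time `t₀` where the derivative of `M` equals `A * M t₀`. -/
theorem hasDerivAt_det_of_linear {d : ℕ} (M : ℝ → Matrix (Fin d) (Fin d) ℝ)
    (A : Matrix (Fin d) (Fin d) ℝ) (t₀ : ℝ)
    (hM : ∀ i j, HasDerivAt (fun t => M t i j) ((A * M t₀) i j) t₀) :
    HasDerivAt (fun t => (M t).det) ((M t₀).det * A.trace) t₀ := by
  -- `det` as a continuous multilinear map of the rows
  let D : ContinuousMultilinearMap ℝ (fun _ : Fin d => (Fin d → ℝ)) ℝ :=
    ⟨(Matrix.detRowAlternating (n := Fin d) (R := ℝ)).toMultilinearMap,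
      (continuous_id (X := Matrix (Fin d) (Fin d) ℝ)).matrix_det⟩
  have hrows : HasDerivAt (F := Fin d → Fin d → ℝ) (fun t i j => M t i j)
      (fun i j => (A * M t₀) i j) t₀ :=
    hasDerivAt_pi.2 fun i => hasDerivAt_pi.2 fun j => hM i j
  have h := (D.hasFDerivAt (fun i j => M t₀ i j)).comp_hasDerivAt t₀ hrows
  refine h.congr_deriv ?_
  rw [ContinuousMultilinearMap.linearDeriv_apply, Matrix.trace, Finset.mul_sum]
  refine Finset.sum_congr rfl fun i _ => ?_
  have hrow : (fun j => (A * M t₀) i j) = ∑ k, A i k • M t₀ k := by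
    ext j
    simp [Matrix.mul_apply, Finset.sum_apply]
  change ((M t₀).updateRow i (fun j => (A * M t₀) i j)).det = _
  rw [hrow, Matrix.det_updateRow_sum, smul_eq_mul, mul_comm, Matrix.diag_apply]

theorem hasFDerivAt_slice {d : ℕ} {f : (Fin d → ℝ) × ℝ → (Fin d → ℝ)} (hf : Differentiable ℝ f)
    (x : Fin d → ℝ) (t : ℝ) :
    HasFDerivAt (fun y => f (y, t))
      ((fderiv ℝ f (x, t)).comp (ContinuousLinearMap.inl ℝ (Fin d → ℝ) ℝ)) x :=
  (hf (x, t)).hasFDerivAt.comp x (hasFDerivAt_prodMk_left x t)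

/-- The mixed derivative `∂_t D_x φ = D_x w ∘ D_x φ`, applied to a vector `v`. -/
theorem hasDerivAt_fderiv_slice {d : ℕ}
    {φ : (Fin d → ℝ) × ℝ → (Fin d → ℝ)} (hφ : ContDiff ℝ 2 φ)
    {w : (Fin d → ℝ) × ℝ → (Fin d → ℝ)} (hw : ContDiff ℝ 1 w)
    (hww : ∀ (xh : Fin d → ℝ) (t : ℝ), w (φ (xh, t), t) = deriv (fun s => φ (xh, s)) t)
    (x : Fin d → ℝ) (t₀ : ℝ) (v : Fin d → ℝ) :
    HasDerivAt (fun t => fderiv ℝ (fun y => φ (y, t)) x v)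
      (fderiv ℝ (fun y => w (y, t₀)) (φ (x, t₀)) (fderiv ℝ (fun y => φ (y, t₀)) x v)) t₀ := by
  have hdφ : Differentiable ℝ φ := hφ.differentiable (by norm_num)
  have hdw : Differentiable ℝ w := hw.differentiable (by norm_num)
  have hd2 : HasFDerivAt (fderiv ℝ φ) (fderiv ℝ (fderiv ℝ φ) (x, t₀)) (x, t₀) :=
    ((hφ.fderiv_right (m := 1) (by norm_num)).differentiable (by norm_num) _).hasFDerivAt
  have hsymm : IsSymmSndFDerivAt ℝ φ (x, t₀) :=
    hφ.contDiffAt.isSymmSndFDerivAt (by simp)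
  have hline (y : Fin d → ℝ) (t : ℝ) : HasDerivAt (fun s => (y, s)) ((0 : Fin d → ℝ), (1 : ℝ)) t :=
    (hasDerivAt_const t y).prodMk (hasDerivAt_id t)
  have htime : HasDerivAt (fun t => fderiv ℝ φ (x, t) (v, 0))
      (fderiv ℝ (fderiv ℝ φ) (x, t₀) (0, 1) (v, 0)) t₀ := by
    simpa using (hd2.comp_hasDerivAt t₀ (hline x t₀)).clm_apply (hasDerivAt_const t₀ (v, (0 : ℝ)))
  have hslice (t : ℝ) : fderiv ℝ (fun y => φ (y, t)) x v = fderiv ℝ φ (x, t) (v, 0) := by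
    rw [(hasFDerivAt_slice hdφ x t).fderiv]; simp
  -- Both sides of `∂_t φ(y,t₀) = w(φ(y,t₀),t₀)` are differentiated at `y = x`.
  have hL : HasFDerivAt (fun y => fderiv ℝ φ (y, t₀) (0, 1))
      ((fderiv ℝ (fun y => w (y, t₀)) (φ (x, t₀))).comp (fderiv ℝ (fun y => φ (y, t₀)) x)) x := by
    have heq : (fun y => fderiv ℝ φ (y, t₀) (0, 1)) = fun y => w (φ (y, t₀), t₀) := by
      ext1 y
      rw [hww]
      exact ((hdφ (y, t₀)).hasFDerivAt.comp_hasDerivAt t₀ (hline y t₀)).deriv.symm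
    rw [heq]
    exact (hasFDerivAt_slice hdw (φ (x, t₀)) t₀).differentiableAt.hasFDerivAt.comp x
      (hasFDerivAt_slice hdφ x t₀).differentiableAt.hasFDerivAt
  have hd2x : HasFDerivAt (fun y => fderiv ℝ φ (y, t₀))
      ((fderiv ℝ (fderiv ℝ φ) (x, t₀)).comp (ContinuousLinearMap.inl ℝ (Fin d → ℝ) ℝ)) x :=
    hd2.comp x (hasFDerivAt_prodMk_left x t₀)
  have hR := hd2x.clm_apply (hasFDerivAt_const ((0 : Fin d → ℝ), (1 : ℝ)) x)
  have hmixed := congrArg (fun L => L v) (hL.unique hR)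
  simp only [hslice]
  refine htime.congr_deriv ?_
  rw [hsymm.eq, ← hslice]
  simpa using hmixed.symm

/-- **Euler expansion formula:** `∂J/∂t (x̂,t₀) = J(x̂,t₀) ⬝ (div_x w(·,t₀)) (φ(x̂,t₀))`. -/
theorem euler_expansion_formula (d : ℕ) (hd : 1 ≤ d)
    (φ : (Fin d → ℝ) × ℝ → (Fin d → ℝ)) (hφ : ContDiff ℝ 2 φ)
    (w : (Fin d → ℝ) × ℝ → (Fin d → ℝ)) (hw : ContDiff ℝ 1 w)
    (hww : ∀ (xh : Fin d → ℝ) (t : ℝ), w (φ (xh, t), t) = deriv (fun s => φ (xh, s)) t)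
    (xh : Fin d → ℝ) (t₀ : ℝ) :
    HasDerivAt (fun t => (Dmat (fun x => φ (x, t)) xh).det)
      ((Dmat (fun x => φ (x, t₀)) xh).det * vdiv (fun x => w (x, t₀)) (φ (xh, t₀))) t₀ := by
  have htr : vdiv (fun x => w (x, t₀)) (φ (xh, t₀)) =
      (Dmat (fun x => w (x, t₀)) (φ (xh, t₀))).trace := rfl
  rw [htr]
  refine hasDerivAt_det_of_linear _ _ t₀ fun i j => ?_
  refine (hasDerivAt_pi.1 (hasDerivAt_fderiv_slice hφ hw hww xh t₀ (Pi.single j 1)) i).congr_deriv ?_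
  -- Matrix product entry: expand `D_x φ e_j` in the standard basis.
  rw [Matrix.mul_apply]
  conv_lhs => rw [pi_eq_sum_univ' (fderiv ℝ (fun y => φ (y, t₀)) xh (Pi.single j 1))]
  simp only [map_sum, map_smul, Finset.sum_apply, Pi.smul_apply, smul_eq_mul]
  exact Finset.sum_congr rfl fun k _ => by
    rw [mul_comm]; simp [Dmat]
end

section
/- (Piola identity.) Let d ≥ 1 and let φ : ℝᵈ → ℝᵈ be twice continuously differentiable (ContDiff ℝ 2). Let C(x̂) = adjugate(Dφ(x̂)) be the adjugate of the Jacobian matrix of φ at x̂. Then every column of C is a divergence-free vector field: for each index k and every x̂ ∈ ℝᵈ, ∑ᵢ ∂/∂x̂ᵢ [ C(x̂)_{i k} ] = 0. -/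
/-!
Writing the cofactor `C i k` as the determinant with rows `∂ⱼφ`, except that row `i` is the basis
vector `e k`, the product rule expresses `∑ᵢ ∂ᵢ C i k` as a sum over pairs `i ≠ j` of determinants
with `e k` in row `i` and `∂ᵢ∂ⱼφ` in row `j` (`hasFDerivAt_adjugate_Dmat`). Since `∂ᵢ∂ⱼφ` is
symmetric in `(i, j)` and exchanging two rows changes the sign (`det_update_update_swap`), the
terms for `(i, j)` and `(j, i)` cancel.
-/

open Matrix MeasureTheory

/-- The terms of the divergence indexed by `(i, j)` and `(j, i)` cancel: exchanging the two
modified rows flips the sign of the determinant. -/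
lemma det_update_update_swap {d : ℕ} (a : Fin d → Fin d → ℝ) (e h : Fin d → ℝ) {i j : Fin d}
    (hij : i ≠ j) :
    Matrix.det (Function.update (Function.update a i e) j h) =
      -Matrix.det (Function.update (Function.update a j e) i h) := by
  have key := (Matrix.detRowAlternating (n := Fin d) (R := ℝ)).map_swap
    (Function.update (Function.update a j e) i h) hij
  refine Eq.trans ?_ key
  change _ = Matrix.det _
  congr 1
  funext l
  by_cases hi : l = i
  · subst hi; simp [hij, hij.symm]
  · by_cases hj : l = j
    · subst hj; simp
    · simp [hi, hj, Equiv.swap_apply_of_ne_of_ne hi hj]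

/-- The determinant as a continuous multilinear function of the rows. -/
noncomputable def detRowsCMM (d : ℕ) :
    ContinuousMultilinearMap ℝ (fun _ : Fin d => Fin d → ℝ) ℝ where
  toMultilinearMap := (Matrix.detRowAlternating (n := Fin d) (R := ℝ)).toMultilinearMap
  cont := Continuous.matrix_det (A := fun a : Matrix (Fin d) (Fin d) ℝ => a) continuous_id

/-- Cofactors as determinants with the partial derivatives `∂ⱼφ` as rows: the `i`-th row is
replaced by the `k`-th basis vector. -/
lemma adjugate_Dmat_apply {d : ℕ} (φ : (Fin d → ℝ) → (Fin d → ℝ)) (y : Fin d → ℝ) (i k : Fin d) :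
    Matrix.adjugate (Dmat φ y) i k =
      detRowsCMM d (fun j => Function.update (fun j => fderiv ℝ φ y (Pi.single j 1)) i
        (Pi.single k 1) j) := by
  rw [← Matrix.transpose_apply (adjugate _), Matrix.adjugate_transpose, Matrix.adjugate_apply]
  rfl

/-- By the product rule, the derivative of a cofactor is a sum over the rows `j ≠ i`, the row
`∂ⱼφ` being differentiated; the row `i` is constant. -/
lemma hasFDerivAt_adjugate_Dmat {d : ℕ} {φ : (Fin d → ℝ) → (Fin d → ℝ)} (hφ : ContDiff ℝ 2 φ)
    (x : Fin d → ℝ) (i k : Fin d) :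
    ∃ L : (Fin d → ℝ) →L[ℝ] ℝ,
      HasFDerivAt (fun y => Matrix.adjugate (Dmat φ y) i k) L x ∧
      ∀ v, L v = ∑ j, if i = j then 0 else
        Matrix.det (Function.update (Function.update
          (fun j => fderiv ℝ φ x (Pi.single j 1)) i (Pi.single k 1)) j
          (fderiv ℝ (fderiv ℝ φ) x v (Pi.single j 1))) := by
  have hD : HasFDerivAt (fderiv ℝ φ) (fderiv ℝ (fderiv ℝ φ) x) x :=
    ((hφ.fderiv_right (m := 1) (by norm_num)).differentiable (by norm_num) x).hasFDerivAt
  have hrow : ∀ j, HasFDerivAt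
      (fun y => Function.update (fun j => fderiv ℝ φ y (Pi.single j 1)) i
        (Pi.single k (1 : ℝ)) j)
      (if i = j then (0 : (Fin d → ℝ) →L[ℝ] (Fin d → ℝ)) else
        (fderiv ℝ (fderiv ℝ φ) x).flip (Pi.single j 1)) x := by
    intro j
    by_cases hij : i = j
    · subst hij
      simpa using hasFDerivAt_const (𝕜 := ℝ) (Pi.single k (1 : ℝ) : Fin d → ℝ) x
    · simp only [Function.update_of_ne (Ne.symm hij), if_neg hij]
      convert! hD.clm_apply (hasFDerivAt_const (Pi.single j (1 : ℝ) : Fin d → ℝ) x) using 1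
      simp
  have hdet := HasFDerivAt.multilinear_comp (f := detRowsCMM d) hrow
  simp only [← adjugate_Dmat_apply] at hdet
  refine ⟨_, hdet, ?_⟩
  intro v
  simp only [_root_.sum_apply, ContinuousLinearMap.comp_apply]
  refine Finset.sum_congr rfl fun j _ => ?_
  by_cases hij : i = j
  · rw [if_pos hij, if_pos hij, _root_.zero_apply, map_zero]
  · simp only [if_neg hij]
    rfl

/-- **Piola identity:** each column of the adjugate of the Jacobian matrix of a
twice continuously differentiable map is a divergence-free vector field. -/
theorem piola_identity (d : ℕ) (hd : 1 ≤ d)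
    (φ : (Fin d → ℝ) → (Fin d → ℝ)) (hφ : ContDiff ℝ 2 φ)
    (k : Fin d) (xh : Fin d → ℝ) :
    vdiv (fun y => fun i => Matrix.adjugate (Dmat φ y) i k) xh = 0 := by
  choose L hL hLv using fun i => hasFDerivAt_adjugate_Dmat hφ xh i k
  have hsymm : IsSymmSndFDerivAt ℝ φ xh := hφ.contDiffAt.isSymmSndFDerivAt (by simp)
  unfold vdiv
  rw [(hasFDerivAt_pi.2 hL).fderiv]
  simp only [ContinuousLinearMap.pi_apply, hLv]
  -- The double sum is antisymmetric in `(i, j)`, hence equal to its own negative.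
  refine self_eq_neg.1 ?_
  conv_lhs => rw [Finset.sum_comm]
  simp only [← Finset.sum_neg_distrib]
  refine Finset.sum_congr rfl fun i _ => Finset.sum_congr rfl fun j _ => ?_
  by_cases hij : i = j
  · simp [hij]
  · rw [if_neg hij, if_neg (Ne.symm hij), det_update_update_swap _ _ _ (Ne.symm hij),
      hsymm.eq]
end

section
/- (Pullback of the divergence to the referent configuration.) Let d ≥ 1, let φ : ℝᵈ → ℝᵈ be twice continuously differentiable (ContDiff ℝ 2), and let Ψ : ℝᵈ → ℝᵈ be continuously differentiable. Then for every x̂ ∈ ℝᵈ, (div Ψ)(φ(x̂)) · det(Dφ(x̂)) = div( x̂ ↦ adjugate(Dφ(x̂)) · Ψ(φ(x̂)) )(x̂), where on the right the divergence is taken in the x̂ variable of the vector field obtained by multiplying the adjugate of the Jacobian matrix by the pulled-back field Ψ ∘ φ. -/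
/-!
By Cramer's rule, the `i`-th component of `adjugate (Dφ) · (Ψ ∘ φ)` is the determinant of `Dφ` with
its `i`-th column `∂ᵢφ` replaced by `Ψ ∘ φ`. Differentiating this determinant in the direction `eᵢ`,
column by column, and summing over `i` gives two kinds of terms.

* The replaced column `i` is differentiated: `∂ᵢ(Ψ ∘ φ)` is the `i`-th column of `DΨ · Dφ`, so these
  terms add up to `tr (adjugate (Dφ) · DΨ · Dφ) = tr DΨ · det Dφ` (`sum_colDet_update_mulVec`).
* A column `k ≠ i` is differentiated: the matrix then has `Ψ ∘ φ` in column `i` and `∂ᵢ∂ₖφ` in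
  column `k`. As second derivatives commute, exchanging `i` and `k` exchanges two columns, so these
  terms cancel in pairs (`colDet_update_update_swap`, `sum_sum_eq_zero_of_antisymm`).
-/

open Matrix MeasureTheory

/-- The determinant as a continuous multilinear function of the family of columns. It is defined
through the rows, which is harmless because the determinant is invariant under transposition. -/
noncomputable def colDet (d : ℕ) :
    ContinuousMultilinearMap ℝ (fun _ : Fin d => Fin d → ℝ) ℝ where
  toMultilinearMap := (Matrix.detRowAlternating (n := Fin d) (R := ℝ)).toMultilinearMap
  cont := by
    change Continuous fun M : Matrix (Fin d) (Fin d) ℝ => M.det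
    exact continuous_id.matrix_det

/-- Cramer's rule in terms of `colDet`: replacing the `i`-th column of `A` by `b`. -/
lemma colDet_update_eq_adjugate_mulVec {d : ℕ} (A : Matrix (Fin d) (Fin d) ℝ) (i : Fin d)
    (b : Fin d → ℝ) : colDet d (Function.update A.col i b) = (A.adjugate *ᵥ b) i := by
  rw [← Matrix.cramer_eq_adjugate_mulVec, ← Matrix.transpose_transpose A,
    Matrix.cramer_transpose_apply, Matrix.transpose_transpose]
  rfl

lemma sum_colDet_update_mulVec {d : ℕ} (A B : Matrix (Fin d) (Fin d) ℝ) :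
    ∑ i, colDet d (Function.update A.col i (B *ᵥ A.col i)) = B.trace * A.det := by
  have h : ∀ i, colDet d (Function.update A.col i (B *ᵥ A.col i)) = (A.adjugate * (B * A)) i i := by
    intro i
    rw [colDet_update_eq_adjugate_mulVec]
    rfl
  simp_rw [h]
  change (A.adjugate * (B * A)).trace = _
  rw [Matrix.trace_mul_comm, Matrix.mul_assoc, Matrix.mul_adjugate]
  simp [mul_comm]

lemma colDet_update_update_swap {d : ℕ} (c : Fin d → Fin d → ℝ) {i k : Fin d} (hik : i ≠ k)
    (v w : Fin d → ℝ) :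
    colDet d (Function.update (Function.update c k v) i w)
      = -colDet d (Function.update (Function.update c i v) k w) := by
  have h := (Matrix.detRowAlternating (n := Fin d) (R := ℝ)).map_swap
    (Function.update (Function.update c i v) k w) hik
  refine Eq.trans ?_ h
  change Matrix.detRowAlternating _ = _
  congr 1
  funext j
  rcases eq_or_ne j i with rfl | hji
  · simp
  · rcases eq_or_ne j k with rfl | hjk
    · simp [hik, hik.symm]
    · simp [hji, hjk, Equiv.swap_apply_of_ne_of_ne hji hjk]

lemma sum_sum_eq_zero_of_antisymm {d : ℕ} (T : Fin d → Fin d → ℝ) (h : ∀ i k, T i k = -T k i) :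
    ∑ i, ∑ k, T i k = 0 := by
  have h1 : ∑ i, ∑ k, T i k = -∑ i, ∑ k, T i k := by
    conv_lhs => rw [Finset.sum_comm]
    simp_rw [← Finset.sum_neg_distrib]
    exact Finset.sum_congr rfl fun i _ => Finset.sum_congr rfl fun k _ => h k i
  linarith

lemma Dmat_mulVec {d : ℕ} (f : (Fin d → ℝ) → (Fin d → ℝ)) (x v : Fin d → ℝ) :
    Dmat f x *ᵥ v = fderiv ℝ f x v := by
  have h : Dmat f x = LinearMap.toMatrix' (fderiv ℝ f x : (Fin d → ℝ) →ₗ[ℝ] (Fin d → ℝ)) := by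
    ext i j
    simp [Dmat, LinearMap.toMatrix'_apply]
  rw [h, LinearMap.toMatrix'_mulVec]
  rfl

lemma Dmat_col {d : ℕ} (f : (Fin d → ℝ) → (Fin d → ℝ)) (x : Fin d → ℝ) (k : Fin d) :
    (Dmat f x).col k = fderiv ℝ f x (Pi.single k 1) := rfl

/-- **Pullback of the divergence to the referent configuration:**
the divergence of `Ψ` at `φ(x̂)` times `det Dφ(x̂)` equals the divergence (in `x̂`) of
the field `x̂ ↦ adjugate(Dφ(x̂)) · Ψ(φ(x̂))`. -/
theorem divergence_pullback (d : ℕ) (hd : 1 ≤ d)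
    (φ : (Fin d → ℝ) → (Fin d → ℝ)) (hφ : ContDiff ℝ 2 φ)
    (Ψ : (Fin d → ℝ) → (Fin d → ℝ)) (hΨ : ContDiff ℝ 1 Ψ)
    (xh : Fin d → ℝ) :
    vdiv Ψ (φ xh) * (Dmat φ xh).det
      = vdiv (fun y => (Matrix.adjugate (Dmat φ y)).mulVec (Ψ (φ y))) xh := by
  -- `M i y` lists the columns of `Dφ(y)` with `Ψ (φ y)` put into column `i`; `dM i k` is the
  -- derivative of its column `k` at `xh`.
  let M : Fin d → (Fin d → ℝ) → Fin d → Fin d → ℝ := fun i y =>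
    Function.update (Dmat φ y).col i (Ψ (φ y))
  let H := fderiv ℝ (fderiv ℝ φ) xh
  let dM : Fin d → Fin d → (Fin d → ℝ) →L[ℝ] (Fin d → ℝ) := fun i =>
    Function.update (fun k => H.flip (Pi.single k 1)) i
      ((fderiv ℝ Ψ (φ xh)).comp (fderiv ℝ φ xh))
  have hH : HasFDerivAt (fderiv ℝ φ) H xh :=
    ((hφ.fderiv_right (m := 1) (by norm_num)).differentiable (by norm_num) xh).hasFDerivAt
  have hsymm : ∀ v w, H v w = H w v :=
    (hφ.contDiffAt (x := xh)).isSymmSndFDerivAt (by simp)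
  have hM : ∀ i, HasFDerivAt (M i) (ContinuousLinearMap.pi (dM i)) xh := by
    intro i
    refine hasFDerivAt_pi.2 fun k => ?_
    rcases eq_or_ne k i with rfl | hki
    · have h := (hΨ.differentiable (by norm_num) (φ xh)).hasFDerivAt.comp xh
        (hφ.differentiable (by norm_num) xh).hasFDerivAt
      simp only [dM, Function.update_self]
      exact h
    · have h := hH.clm_apply (hasFDerivAt_const (Pi.single k (1 : ℝ)) xh)
      have h1 : (fun y => M i y k) = fun y => fderiv ℝ φ y (Pi.single k 1) := by
        funext y
        simp [M, hki, Dmat_col]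
      rw [h1]
      simpa [dM, hki] using h
  have hg : HasFDerivAt (fun y => (Matrix.adjugate (Dmat φ y)).mulVec (Ψ (φ y)))
      (ContinuousLinearMap.pi fun i =>
        ((colDet d).linearDeriv (M i xh)).comp (ContinuousLinearMap.pi (dM i))) xh := by
    refine hasFDerivAt_pi'' fun i => ?_
    have h := ((colDet d).hasFDerivAt (M i xh)).comp xh (hM i)
    refine h.congr_of_eventuallyEq (Filter.Eventually.of_forall fun y => ?_)
    exact (colDet_update_eq_adjugate_mulVec _ _ _).symm
  -- `T i k` is the contribution of column `k ≠ i` to the derivative of the `i`-th component.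
  let T : Fin d → Fin d → ℝ := fun i k => if k = i then 0 else
    colDet d (Function.update (M i xh) k (H (Pi.single i 1) (Pi.single k 1)))
  have hT : ∑ i, ∑ k, T i k = 0 := by
    refine sum_sum_eq_zero_of_antisymm T fun i k => ?_
    rcases eq_or_ne i k with rfl | hik
    · simp [T]
    · simp only [T, M, if_neg hik, if_neg hik.symm]
      rw [hsymm, colDet_update_update_swap _ hik.symm]
  have hterm : ∀ i, fderiv ℝ (fun y => (Matrix.adjugate (Dmat φ y)).mulVec (Ψ (φ y))) xh
      (Pi.single i 1) i = colDet d (Function.update (Dmat φ xh).col i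
        (Dmat Ψ (φ xh) *ᵥ (Dmat φ xh).col i)) + ∑ k, T i k := by
    intro i
    rw [hg.fderiv]
    simp only [ContinuousLinearMap.coe_pi', ContinuousLinearMap.comp_apply,
      ContinuousMultilinearMap.linearDeriv_apply]
    rw [← Finset.add_sum_erase _ _ (Finset.mem_univ i),
      ← Finset.add_sum_erase (a := i) _ (T i) (Finset.mem_univ i)]
    have hTi : T i i = 0 := if_pos rfl
    rw [hTi, zero_add]
    congr 1
    · rw [Dmat_mulVec]
      simp only [M, dM, Function.update_self, Function.update_idem]
      rfl
    · refine Finset.sum_congr rfl fun k hk => ?_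
      have hki : k ≠ i := Finset.ne_of_mem_erase hk
      simp [T, dM, hki]
  have htr : vdiv Ψ (φ xh) = (Dmat Ψ (φ xh)).trace := rfl
  rw [htr, vdiv, Finset.sum_congr rfl fun i _ => hterm i, Finset.sum_add_distrib, hT, add_zero,
    sum_colDet_update_mulVec]
end

section
/- (Differential form of the Space Conservation Law, Thomas–Lombard.) Let d ≥ 1 and let φ : ℝᵈ × ℝ → ℝᵈ be twice continuously differentiable (ContDiff ℝ 2). Write ŵ(x̂,t) = ∂φ/∂t(x̂,t). Then for every x̂ ∈ ℝᵈ and t₀ ∈ ℝ, the function t ↦ J(x̂,t) = det Dφ_t(x̂) is differentiable at t₀ with derivative equal to div( x̂ ↦ adjugate(Dφ_{t₀}(x̂)) · ŵ(x̂,t₀) )(x̂), i.e., ∂J/∂t = div̂( adjugate(Dφ_t) ŵ ) holds everywhere. -/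
/-!
The `i`-th component of `adjugate(Dφ) w` is, by Cramer's rule, the determinant of `Dφ` with its
`i`-th column replaced by `w`. Since the determinant is multilinear in the columns, differentiating
this component in the direction `e_i` and summing over `i` gives two kinds of terms:

* the diagonal ones, in which the new column `w` is differentiated. As `∂_i ∂_t φ = ∂_t ∂_i φ`, their
  sum is the expansion of `∂_t det(Dφ)` (`hasFDerivAt_det_rows` in the time direction);
* the off-diagonal ones, the determinants of `Dφ` with column `i` replaced by `w` and column `k ≠ i`
  replaced by `∂_i ∂_k φ`. Exchanging `i` and `k` swaps two columns while `∂_i ∂_k φ` is symmetric, so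
  these terms cancel in pairs (`sum_det_update_update_eq_zero`). This is the Piola identity.

Columns are handled as the rows of the transpose, where `Matrix.detRowAlternating` applies.
-/

open Matrix MeasureTheory

/-- The determinant as a continuous multilinear function of the rows. -/
noncomputable def detRowCMM (d : ℕ) :
    ContinuousMultilinearMap ℝ (fun _ : Fin d => Fin d → ℝ) ℝ :=
  { (Matrix.detRowAlternating (n := Fin d) (R := ℝ)).toMultilinearMap with
    cont := Continuous.matrix_det (A := fun M : Matrix (Fin d) (Fin d) ℝ => M) continuous_id }

lemma detRowCMM_apply {d : ℕ} (M : Fin d → Fin d → ℝ) :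
    detRowCMM d M = (Matrix.of M).det := rfl

/-- Row-by-row differentiation of a determinant. -/
lemma hasFDerivAt_det_rows {d : ℕ} {G : Type*} [NormedAddCommGroup G] [NormedSpace ℝ G]
    {V : Fin d → G → (Fin d → ℝ)} {V' : Fin d → G →L[ℝ] (Fin d → ℝ)} {x : G}
    (hV : ∀ i, HasFDerivAt (V i) (V' i) x) :
    HasFDerivAt (fun y => detRowCMM d (fun j => V j y))
      (∑ i, (detRowCMM d).toContinuousLinearMap (fun j => V j x) i ∘L V' i) x :=
  HasFDerivAt.multilinear_comp (detRowCMM d) hV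

/-- For symmetric `H`, the terms `(i, k)` and `(k, i)` differ by a swap of two rows and cancel. -/
lemma sum_det_update_update_eq_zero {d : ℕ} (C : Fin d → Fin d → ℝ) (w : Fin d → ℝ)
    (H : Fin d → Fin d → (Fin d → ℝ)) (hH : ∀ i k, H i k = H k i) :
    ∑ i, ∑ k, (if k = i then 0 else
      detRowCMM d (Function.update (Function.update C i w) k (H i k))) = 0 := by
  set T : Fin d → Fin d → ℝ := fun i k => if k = i then 0 else
      detRowCMM d (Function.update (Function.update C i w) k (H i k)) with hT
  have hanti : ∀ i k, T i k = - T k i := by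
    intro i k
    by_cases hik : k = i
    · simp [hT, hik]
    · simp only [hT, if_neg hik, if_neg (Ne.symm hik)]
      have h := (Matrix.detRowAlternating (n := Fin d) (R := ℝ)).map_swap
        (Function.update (Function.update C k w) i (H k i)) hik
      have e : Function.update (Function.update C k w) i (H k i) ∘ Equiv.swap k i
          = Function.update (Function.update C i w) k (H i k) := by
        funext j
        by_cases h1 : j = k
        · subst h1
          simp [hH i j]
        · by_cases h2 : j = i
          · subst h2
            simp [h1, hik]
          · simp [Equiv.swap_apply_of_ne_of_ne h1 h2, h1, h2]
      rw [e] at h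
      exact h
  have h1 : ∑ i, ∑ k, T i k = - ∑ i, ∑ k, T i k := by
    conv_lhs => rw [Finset.sum_comm]
    simp only [← Finset.sum_neg_distrib]
    exact Finset.sum_congr rfl fun i _ => Finset.sum_congr rfl fun k _ => hanti k i
  linarith

/-- **Differential form of the Space Conservation Law (Thomas–Lombard):**
the time derivative of the Jacobian `J(x̂,·)` at `t₀` equals the (referential) divergence of
`x̂ ↦ adjugate(Dφ_{t₀}(x̂)) · ŵ(x̂,t₀)` where `ŵ = ∂φ/∂t`. -/
theorem differential_SCL (d : ℕ) (hd : 1 ≤ d)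
    (φ : (Fin d → ℝ) × ℝ → (Fin d → ℝ)) (hφ : ContDiff ℝ 2 φ)
    (xh : Fin d → ℝ) (t₀ : ℝ) :
    HasDerivAt (fun t => (Dmat (fun x => φ (x, t)) xh).det)
      (vdiv (fun y => (Matrix.adjugate (Dmat (fun x => φ (x, t₀)) y)).mulVec
        (deriv (fun s => φ (y, s)) t₀)) xh) t₀ := by
  have hdiff : Differentiable ℝ φ := hφ.differentiable (by norm_num)
  have hdiff2 : Differentiable ℝ (fderiv ℝ φ) :=
    (hφ.fderiv_right (m := 1) (by norm_num)).differentiable (by norm_num)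
  set B := fderiv ℝ (fderiv ℝ φ) (xh, t₀) with hB
  have hsymm : ∀ u v, B u v = B v u :=
    (hφ.contDiffAt (x := (xh, t₀))).isSymmSndFDerivAt (by simp)
  -- `C p j` is the `j`-th column of the spatial Jacobian matrix at `p = (y, t)`.
  set C : (Fin d → ℝ) × ℝ → Fin d → Fin d → ℝ :=
    fun p j => fderiv ℝ φ p (Pi.single j 1, 0) with hC
  have hslice : ∀ y t, fderiv ℝ (fun x => φ (x, t)) y
      = (fderiv ℝ φ (y, t)) ∘L (ContinuousLinearMap.inl ℝ (Fin d → ℝ) ℝ) := fun y t =>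
    ((hdiff (y, t)).hasFDerivAt.comp y (hasFDerivAt_prodMk_left y t)).fderiv
  have hDmat : ∀ y t, Dmat (fun x => φ (x, t)) y = (Matrix.of (C (y, t)))ᵀ := by
    intro y t
    ext i j
    simp [Dmat, hslice, hC]
  have hw : ∀ y, deriv (fun s => φ (y, s)) t₀ = fderiv ℝ φ (y, t₀) (0, 1) := by
    intro y
    have h := ((hdiff (y, t₀)).hasFDerivAt.comp t₀ (hasFDerivAt_prodMk_right y t₀)).hasDerivAt
    have h' := h.deriv
    simp only [ContinuousLinearMap.comp_apply, ContinuousLinearMap.inr_apply] at h'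
    exact h'
  have happ : ∀ v, HasFDerivAt (fun p => fderiv ℝ φ p v) (B.flip v) (xh, t₀) := by
    intro v
    simpa using (hdiff2 (xh, t₀)).hasFDerivAt.clm_apply (hasFDerivAt_const v (xh, t₀))
  have hspace : ∀ v, HasFDerivAt (fun y => fderiv ℝ φ (y, t₀) v)
      (B.flip v ∘L ContinuousLinearMap.inl ℝ (Fin d → ℝ) ℝ) xh := fun v =>
    HasFDerivAt.comp (g := fun p => fderiv ℝ φ p v) (f := fun y => (y, t₀)) xh (happ v)
      (hasFDerivAt_prodMk_left xh t₀)
  have htime : ∀ v, HasFDerivAt (fun t => fderiv ℝ φ (xh, t) v)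
      (B.flip v ∘L ContinuousLinearMap.inr ℝ (Fin d → ℝ) ℝ) t₀ := fun v =>
    HasFDerivAt.comp (g := fun p => fderiv ℝ φ p v) (f := fun t => (xh, t)) t₀ (happ v)
      (hasFDerivAt_prodMk_right xh t₀)
  have hJ : HasDerivAt (fun t => (Dmat (fun x => φ (x, t)) xh).det)
      (∑ i, detRowCMM d (Function.update (C (xh, t₀)) i (B (0, 1) (Pi.single i 1, 0)))) t₀ := by
    have h := (hasFDerivAt_det_rows (V := fun j t => C (xh, t) j)
      (fun j => htime (Pi.single j 1, 0))).hasDerivAt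
    simp only [hDmat, Matrix.det_transpose]
    simpa [detRowCMM_apply, ContinuousMultilinearMap.toContinuousLinearMap] using h
  convert hJ using 1
  set w := fderiv ℝ φ (xh, t₀) (0, 1) with hwdef
  -- By Cramer's rule, component `i` of the vector field is the determinant with column `i`
  -- replaced by `∂φ/∂t`.
  have hg : (fun y => (Matrix.adjugate (Dmat (fun x => φ (x, t₀)) y)).mulVec
        (deriv (fun s => φ (y, s)) t₀))
      = fun y i => detRowCMM d (fun j =>
          Function.update (C (y, t₀)) i (fderiv ℝ φ (y, t₀) (0, 1)) j) := by
    funext y i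
    rw [← Matrix.cramer_eq_adjugate_mulVec, hDmat, hw, Matrix.cramer_transpose_apply]
    rfl
  have hrow : ∀ i j, HasFDerivAt
      (fun y => Function.update (C (y, t₀)) i (fderiv ℝ φ (y, t₀) (0, 1)) j)
      (B.flip (if j = i then (0, 1) else (Pi.single j 1, 0)) ∘L
        ContinuousLinearMap.inl ℝ (Fin d → ℝ) ℝ) xh := by
    intro i j
    by_cases hji : j = i
    · subst hji
      simpa using hspace (0, 1)
    · simpa [hji, hC] using hspace (Pi.single j 1, 0)
  have hgd := hasFDerivAt_pi.2 fun i => hasFDerivAt_det_rows (hrow i)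
  rw [vdiv, hg, hgd.fderiv]
  have hsum := sum_det_update_update_eq_zero (C (xh, t₀)) w
    (fun i k => B (Pi.single i 1, 0) (Pi.single k 1, 0)) (fun i k => hsymm _ _)
  refine Eq.trans ?_ ((congrArg (_ + ·) hsum).trans (add_zero _))
  rw [← Finset.sum_add_distrib]
  refine Finset.sum_congr rfl fun i _ => ?_
  have hdiag : detRowCMM d (Function.update (C (xh, t₀)) i (B (0, 1) (Pi.single i 1, 0)))
      = ∑ k, if k = i then
        detRowCMM d (Function.update (C (xh, t₀)) i (B (0, 1) (Pi.single i 1, 0))) else 0 := by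
    simp
  rw [hdiag, ← Finset.sum_add_distrib]
  simp only [ContinuousLinearMap.pi_apply, ContinuousLinearMap.sum_apply]
  refine Finset.sum_congr rfl fun k _ => ?_
  by_cases hki : k = i
  · subst hki
    simp [ContinuousMultilinearMap.toContinuousLinearMap, hsymm (0, 1)]
  · simp [ContinuousMultilinearMap.toContinuousLinearMap, hki, hwdef]
end

section
/- (Weak form of the Space Conservation Law on the referent configuration.) Let d ≥ 1, let φ : ℝᵈ × ℝ → ℝᵈ be twice continuously differentiable (ContDiff ℝ 2), write ŵ(x̂,t) = ∂φ/∂t(x̂,t) and J(x̂,t) = det Dφ_t(x̂). Let K̂ ⊆ ℝᵈ be compact and measurable and let ψ̂ : ℝᵈ → ℝ be continuous. Then for every t₀ ∈ ℝ, the function t ↦ ∫_{K̂} ψ̂(x̂) · J(x̂,t) dx̂ is differentiable at t₀ with derivative ∫_{K̂} ψ̂(x̂) · div( x̂ ↦ adjugate(Dφ_{t₀}(x̂)) · ŵ(x̂,t₀) )(x̂) dx̂. -/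
/-!
Write `c_j = ∂φ/∂x_j` for the columns of `Dφ_t` and `w = ∂φ/∂t`. By Cramer's rule the `i`-th
component of `adj(Dφ_t) w` is the determinant of `Dφ_t` with its `i`-th column replaced by `w`, so by
multilinearity of the determinant
`div (adj(Dφ_t) w) = ∑ᵢ det(c; c_i ↦ ∂ᵢ w) + ∑_{i ≠ j} det(c; c_i ↦ w, c_j ↦ ∂ᵢ∂ⱼφ)`.
The double sum vanishes because its summand is antisymmetric in `(i, j)`: the second derivative is
symmetric and the determinant is alternating (this is the Piola identity). Since
`∂ᵢ w = ∂ₜ c_i`, the first sum is `∂ₜ det(c)`; see `sum_update_eq` and `vdiv_eq`. The theorem then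
follows by differentiating under the integral sign over the compact set `K`: the `t`-derivative of
the integrand is jointly continuous, hence bounded on `K × [t₀ - 1, t₀ + 1]`.
-/

open Matrix MeasureTheory

/-- The determinant as a continuous alternating map of the vectors `v_j`, which are the rows of
`Matrix.of v`, equivalently the columns of its transpose. -/
noncomputable def detC (d : ℕ) : (Fin d → ℝ) [⋀^Fin d]→L[ℝ] ℝ :=
  { (Matrix.detRowAlternating : (Fin d → ℝ) [⋀^Fin d]→ₗ[ℝ] ℝ) with
    cont := Continuous.matrix_det (A := fun v : Fin d → Fin d → ℝ => Matrix.of v) continuous_id }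

lemma detC_apply {d : ℕ} (v : Fin d → Fin d → ℝ) : detC d v = (Matrix.of v).det := rfl

/-- The columns `∂φ/∂x_j (p)` of the spatial Jacobian matrix at the space-time point `p`. -/
noncomputable def cols {d : ℕ} (φ : (Fin d → ℝ) × ℝ → (Fin d → ℝ)) (p : (Fin d → ℝ) × ℝ) :
    Fin d → Fin d → ℝ :=
  fun j => fderiv ℝ φ p (Pi.single j 1, 0)

/-- The algebraic core: the contributions of the symmetric array `H` to the derivatives of the
determinants `det(c; c_i ↦ w)` cancel in pairs. -/
lemma sum_update_eq {d : ℕ} (c b : Fin d → Fin d → ℝ) (w : Fin d → ℝ)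
    (H : Fin d → Fin d → Fin d → ℝ) (hH : ∀ i j, H i j = H j i) :
    ∑ i, ∑ j, detC d (Function.update (Function.update c i w) j
        (if j = i then b i else H i j)) =
      ∑ i, detC d (Function.update c i (b i)) := by
  let S : Fin d → Fin d → ℝ := fun i j =>
    if j = i then 0 else detC d (Function.update (Function.update c i w) j (H i j))
  have hS : ∀ i j, S i j = - S j i := by
    intro i j
    by_cases h : j = i
    · subst h; simp [S]
    · have h' : i ≠ j := fun e => h e.symm
      simp only [S, h, h', if_false]
      refine Eq.trans ?_ ((detC d).toAlternatingMap.map_swap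
        (Function.update (Function.update c j w) i (H j i)) h')
      refine congrArg (detC d) ?_
      funext k
      rcases eq_or_ne k i with rfl | hki
      · simp [h', h]
      · rcases eq_or_ne k j with rfl | hkj
        · simp [hH]
        · simp [Equiv.swap_apply_of_ne_of_ne hki hkj, hki, hkj]
  have hS0 : ∑ i, ∑ j, S i j = 0 := by
    have h1 : ∑ i, ∑ j, S i j = - ∑ i, ∑ j, S i j := by
      conv_lhs => rw [Finset.sum_comm]
      simp_rw [← Finset.sum_neg_distrib]
      exact Finset.sum_congr rfl fun i _ => Finset.sum_congr rfl fun j _ => hS j i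
    linarith
  have key : ∀ i j, detC d (Function.update (Function.update c i w) j
        (if j = i then b i else H i j)) =
      S i j + (if j = i then detC d (Function.update c i (b i)) else 0) := by
    intro i j
    by_cases h : j = i
    · subst h; simp [S]
    · simp [S, h]
  simp_rw [key, Finset.sum_add_distrib, hS0]
  simp

section

variable {d : ℕ} {φ : (Fin d → ℝ) × ℝ → (Fin d → ℝ)}

lemma fderiv_slice (hφ : ContDiff ℝ 2 φ) (x : Fin d → ℝ) (t : ℝ) (v : Fin d → ℝ) :
    fderiv ℝ (fun y => φ (y, t)) x v = fderiv ℝ φ (x, t) (v, 0) := by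
  have h := (hφ.differentiable (by norm_num) (x, t)).hasFDerivAt.comp x
    (hasFDerivAt_prodMk_left (𝕜 := ℝ) x t)
  rw [HasFDerivAt.fderiv (f := fun y => φ (y, t)) h]
  simp

lemma deriv_slice (hφ : ContDiff ℝ 2 φ) (x : Fin d → ℝ) (t : ℝ) :
    deriv (fun s => φ (x, s)) t = fderiv ℝ φ (x, t) (0, 1) := by
  have h := (hφ.differentiable (by norm_num) (x, t)).hasFDerivAt.comp t
    (hasFDerivAt_prodMk_right (𝕜 := ℝ) x t)
  rw [HasDerivAt.deriv (f := fun s => φ (x, s)) h.hasDerivAt]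
  simp

lemma Dmat_slice (hφ : ContDiff ℝ 2 φ) (x : Fin d → ℝ) (t : ℝ) :
    Dmat (fun y => φ (y, t)) x = (Matrix.of (cols φ (x, t)))ᵀ := by
  ext i j
  simp [Dmat, cols, fderiv_slice hφ]

lemma det_Dmat_slice (hφ : ContDiff ℝ 2 φ) (x : Fin d → ℝ) (t : ℝ) :
    (Dmat (fun y => φ (y, t)) x).det = detC d (cols φ (x, t)) := by
  rw [Dmat_slice hφ, Matrix.det_transpose, detC_apply]

/-- Cramer's rule for the vector field `adj(Dφ_t) w`. -/
lemma adjugate_mulVec_slice (hφ : ContDiff ℝ 2 φ) (x : Fin d → ℝ) (t : ℝ) (i : Fin d) :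
    ((Matrix.adjugate (Dmat (fun z => φ (z, t)) x)).mulVec (deriv (fun s => φ (x, s)) t)) i =
      detC d (Function.update (cols φ (x, t)) i (fderiv ℝ φ (x, t) (0, 1))) := by
  rw [Dmat_slice hφ, deriv_slice hφ, ← Matrix.cramer_eq_adjugate_mulVec,
    Matrix.cramer_transpose_apply, detC_apply]
  rfl

lemma hasFDerivAt_fderiv_apply (hφ : ContDiff ℝ 2 φ) (p v : (Fin d → ℝ) × ℝ) :
    HasFDerivAt (fun q => fderiv ℝ φ q v) ((fderiv ℝ (fderiv ℝ φ) p).flip v) p := by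
  have h : HasFDerivAt (fderiv ℝ φ) (fderiv ℝ (fderiv ℝ φ) p) p :=
    ((hφ.fderiv_right (m := 1) (by norm_num)).differentiable (by norm_num) p).hasFDerivAt
  simpa using h.clm_apply (hasFDerivAt_const v p)

lemma contDiff_jac (hφ : ContDiff ℝ 2 φ) : ContDiff ℝ 1 (fun p => detC d (cols φ p)) := by
  refine (detC d).toContinuousMultilinearMap.contDiff.comp (contDiff_pi.2 fun j => ?_)
  exact (hφ.fderiv_right (m := 1) (by norm_num)).clm_apply contDiff_const

/-- The pointwise conservation law `div (adj(Dφ_t) w) = ∂ₜ det Dφ_t`. -/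
lemma vdiv_eq (hφ : ContDiff ℝ 2 φ) (x : Fin d → ℝ) (t : ℝ) :
    vdiv (fun y => (Matrix.adjugate (Dmat (fun z => φ (z, t)) y)).mulVec
        (deriv (fun s => φ (y, s)) t)) x =
      fderiv ℝ (fun p => detC d (cols φ p)) (x, t) (0, 1) := by
  set B := fderiv ℝ (fderiv ℝ φ) (x, t) with hB
  have hsymm : ∀ u v, B u v = B v u :=
    (hφ.contDiffAt (x := (x, t))).isSymmSndFDerivAt (by simp)
  -- The derivative of `c` with its `i`-th entry replaced by `w`.
  have hupd : ∀ i : Fin d, HasFDerivAt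
      (fun p => Function.update (cols φ p) i (fderiv ℝ φ p (0, 1)))
      (ContinuousLinearMap.pi fun j =>
        if j = i then B.flip (0, 1) else B.flip (Pi.single j 1, 0)) (x, t) := by
    intro i
    rw [hasFDerivAt_pi']
    intro j
    by_cases h : j = i
    · subst h
      simpa using hasFDerivAt_fderiv_apply hφ (x, t) (0, 1)
    · simpa [h, cols] using hasFDerivAt_fderiv_apply hφ (x, t) (Pi.single j 1, 0)
  have hcols : HasFDerivAt (fun p => cols φ p)
      (ContinuousLinearMap.pi fun j => B.flip (Pi.single j 1, 0)) (x, t) :=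
    hasFDerivAt_pi.2 fun j => hasFDerivAt_fderiv_apply hφ (x, t) (Pi.single j 1, 0)
  have hJ := ((detC d).hasFDerivAt (cols φ (x, t))).comp (x, t) hcols
  have hg : ∀ i, HasFDerivAt (fun y => ((Matrix.adjugate (Dmat (fun z => φ (z, t)) y)).mulVec
        (deriv (fun s => φ (y, s)) t)) i) _ x := fun i => by
    simp_rw [adjugate_mulVec_slice hφ]
    have h := (((detC d).hasFDerivAt _).comp (x, t) (hupd i)).comp x
      (hasFDerivAt_prodMk_left (𝕜 := ℝ) x t)
    exact h
  have hG := hasFDerivAt_pi.2 hg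
  rw [vdiv, HasFDerivAt.fderiv hG, HasFDerivAt.fderiv (f := fun p => detC d (cols φ p)) hJ]
  simp only [ContinuousLinearMap.pi_apply, ContinuousLinearMap.comp_apply,
    ContinuousLinearMap.inl_apply, ContinuousMultilinearMap.linearDeriv_apply,
    ContinuousLinearMap.flip_apply]
  have := sum_update_eq (cols φ (x, t)) (fun i => B (0, 1) (Pi.single i 1, 0))
    (fderiv ℝ φ (x, t) (0, 1)) (fun i j => B (Pi.single i 1, 0) (Pi.single j 1, 0))
    (fun i j => hsymm _ _)
  refine Eq.trans ?_ this
  refine Finset.sum_congr rfl fun i _ => Finset.sum_congr rfl fun j _ => ?_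
  by_cases h : j = i
  · subst h
    simp [hsymm (0, 1)]
  · simp [h]

end

/-- **Weak form of the Space Conservation Law on the referent configuration.** -/
theorem weak_SCL (d : ℕ) (hd : 1 ≤ d)
    (φ : (Fin d → ℝ) × ℝ → (Fin d → ℝ)) (hφ : ContDiff ℝ 2 φ)
    (K : Set (Fin d → ℝ)) (hK : IsCompact K) (hKm : MeasurableSet K)
    (ψ : (Fin d → ℝ) → ℝ) (hψ : Continuous ψ) (t₀ : ℝ) :
    HasDerivAt (fun t => ∫ x in K, ψ x * (Dmat (fun y => φ (y, t)) x).det)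
      (∫ x in K, ψ x * vdiv (fun y => (Matrix.adjugate (Dmat (fun z => φ (z, t₀)) y)).mulVec
        (deriv (fun s => φ (y, s)) t₀)) x) t₀ := by
  simp_rw [vdiv_eq hφ, det_Dmat_slice hφ]
  have hJ := contDiff_jac hφ
  set J : (Fin d → ℝ) × ℝ → ℝ := fun p => detC d (cols φ p) with hJdef
  have hJc : Continuous J := hJ.continuous
  have hJ'c : Continuous fun p => fderiv ℝ J p (0, 1) :=
    (hJ.continuous_fderiv (by norm_num)).clm_apply continuous_const
  have hF'c : Continuous fun p : (Fin d → ℝ) × ℝ => ψ p.1 * fderiv ℝ J p (0, 1) :=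
    (hψ.comp continuous_fst).mul hJ'c
  have hFc : ∀ t, Continuous fun x => ψ x * J (x, t) := fun t =>
    hψ.mul (hJc.comp (by fun_prop))
  obtain ⟨C, hC⟩ := (hK.prod (isCompact_closedBall t₀ 1)).exists_bound_of_continuousOn
    hF'c.continuousOn
  refine (hasDerivAt_integral_of_dominated_loc_of_deriv_le
    (F := fun t x => ψ x * J (x, t)) (F' := fun t x => ψ x * fderiv ℝ J (x, t) (0, 1))
    (bound := fun _ => C) (Metric.closedBall_mem_nhds t₀ one_pos)
    (Filter.Eventually.of_forall fun t => (hFc t).aestronglyMeasurable)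
    ((hFc t₀).continuousOn.integrableOn_compact hK)
    (hF'c.comp (by fun_prop : Continuous fun x => (x, t₀))).aestronglyMeasurable
    ?_ ?_ ?_).2
  · filter_upwards [ae_restrict_mem hKm] with x hx t ht
    exact hC (x, t) ⟨hx, ht⟩
  · exact integrableOn_const hK.measure_lt_top.ne
  · refine Filter.Eventually.of_forall fun x t _ => ?_
    have h := (hJ.differentiable (by norm_num) (x, t)).hasFDerivAt.comp t
      (hasFDerivAt_prodMk_right (𝕜 := ℝ) x t)
    have h2 := h.hasDerivAt
    simp only [ContinuousLinearMap.comp_apply, ContinuousLinearMap.inr_apply] at h2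
    exact h2.const_mul (ψ x)
end

section
/- (Reynolds transport theorem pulled back to the referent configuration.) Let d ≥ 1, let φ : ℝᵈ × ℝ → ℝᵈ be twice continuously differentiable (ContDiff ℝ 2), write ŵ(x̂,t) = ∂φ/∂t(x̂,t) and J(x̂,t) = det Dφ_t(x̂). Let f̂ : ℝᵈ × ℝ → ℝ be continuously differentiable and let K̂ ⊆ ℝᵈ be compact and measurable. Then for every t₀ ∈ ℝ, the function t ↦ ∫_{K̂} f̂(x̂,t) · J(x̂,t) dx̂ is differentiable at t₀ with derivative ∫_{K̂} [ (∂f̂/∂t)(x̂,t₀) · J(x̂,t₀) + f̂(x̂,t₀) · div( x̂ ↦ adjugate(Dφ_{t₀}(x̂)) · ŵ(x̂,t₀) )(x̂) ] dx̂. -/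
/-!
The integrand `f · J` is `C¹` in `(x, t)`, so one may differentiate under the integral over the
compact set `K` (`hasDerivAt_setIntegral_of_contDiff`). What remains is the pointwise identity
`∂J/∂t = div (adjugate (Dφ) w)`.

By Cramer's rule the `j`-th component of `adjugate (Dφ) w` is the determinant of `Dφ` with its
`j`-th column replaced by `w`. All these determinants, and `J` itself, have columns of the form
`fderiv ℝ φ p (a k)` for fixed directions `a k` in space-time, so their derivatives are given by
multilinearity (`fderiv_detFrame_apply`). In `∑ j, ∂_j det (Dφ with column j := w)` the terms
differentiating column `j` add up to `∂J/∂t`, since `∂_j w = ∂_t ∂_j φ`. The terms differentiating a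
column `k ≠ j` have `w` in column `j` and `∂_j ∂_k φ` in column `k`; symmetry of second
derivatives makes them antisymmetric in `(j, k)`, so they cancel (`sum_sum_det_update`).
-/

open Matrix MeasureTheory

/-- The determinant as a continuous multilinear function of the rows. -/
noncomputable def detCMM (d : ℕ) :
    ContinuousMultilinearMap ℝ (fun _ : Fin d => Fin d → ℝ) ℝ :=
  { (Matrix.detRowAlternating (R := ℝ) (n := Fin d)).toMultilinearMap with
    cont := Continuous.matrix_det continuous_id }

lemma detCMM_apply {d : ℕ} (m : Fin d → Fin d → ℝ) :
    detCMM d m = Matrix.detRowAlternating m := rfl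

/-- The determinant of the vectors obtained by differentiating `φ` at `p` in the directions
`a k`. The vectors are taken as rows, i.e. as columns of the transposed matrix. -/
noncomputable def detFrame {d : ℕ} (φ : (Fin d → ℝ) × ℝ → (Fin d → ℝ))
    (a : Fin d → (Fin d → ℝ) × ℝ) (p : (Fin d → ℝ) × ℝ) : ℝ :=
  detCMM d (fun k => fderiv ℝ φ p (a k))

/-- The spatial coordinate directions in space-time. -/
def spaceDir (d : ℕ) (k : Fin d) : (Fin d → ℝ) × ℝ := (Pi.single k 1, 0)

lemma contDiff_detFrame {d : ℕ} {φ : (Fin d → ℝ) × ℝ → (Fin d → ℝ)} (hφ : ContDiff ℝ 2 φ)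
    (a : Fin d → (Fin d → ℝ) × ℝ) : ContDiff ℝ 1 (detFrame φ a) := by
  have h : ContDiff ℝ 1 (fderiv ℝ φ) := hφ.fderiv_right (by norm_num)
  exact (detCMM d).contDiff.comp (contDiff_pi.2 fun k => h.clm_apply contDiff_const)

lemma fderiv_detFrame_apply {d : ℕ} {φ : (Fin d → ℝ) × ℝ → (Fin d → ℝ)} (hφ : ContDiff ℝ 2 φ)
    (a : Fin d → (Fin d → ℝ) × ℝ) (p u : (Fin d → ℝ) × ℝ) :
    fderiv ℝ (detFrame φ a) p u =
      ∑ k, detCMM d (Function.update (fun k => fderiv ℝ φ p (a k)) k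
        (fderiv ℝ (fderiv ℝ φ) p u (a k))) := by
  have h : ContDiff ℝ 1 (fderiv ℝ φ) := hφ.fderiv_right (by norm_num)
  have hp : HasFDerivAt (fderiv ℝ φ) (fderiv ℝ (fderiv ℝ φ) p) p :=
    (h.differentiable (by norm_num) p).hasFDerivAt
  have hm : HasFDerivAt (fun q => fun k => fderiv ℝ φ q (a k))
      (ContinuousLinearMap.pi fun k => (fderiv ℝ (fderiv ℝ φ) p).flip (a k)) p := by
    refine hasFDerivAt_pi.2 fun k => ?_
    simpa using hp.clm_apply (hasFDerivAt_const (a k) p)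
  have := ((detCMM d).hasFDerivAt (fun k => fderiv ℝ φ p (a k))).comp p hm
  have h2 : fderiv ℝ (detFrame φ a) p = _ := this.fderiv
  rw [h2, ContinuousLinearMap.comp_apply, ContinuousMultilinearMap.linearDeriv_apply]
  rfl

/-- Replace row `j` by `w`, differentiate each row in turn (row `j` to `W j`, row `k ≠ j` to
`S j k`), and sum over `j`. For symmetric `S` the off-diagonal terms cancel in pairs. -/
lemma sum_sum_det_update {d : ℕ} (c W : Fin d → Fin d → ℝ) (w : Fin d → ℝ)
    (S : Fin d → Fin d → Fin d → ℝ) (hS : ∀ j k, S j k = S k j) :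
    ∑ j, ∑ k, detCMM d (Function.update (Function.update c j w) k
        (if k = j then W j else S j k)) =
      ∑ j, detCMM d (Function.update c j (W j)) := by
  set T : Fin d → Fin d → ℝ := fun j k =>
    if k = j then 0 else detCMM d (Function.update (Function.update c j w) k (S j k)) with hT
  have hanti : ∀ j k, T j k = - T k j := by
    intro j k
    by_cases hjk : k = j
    · simp [hT, hjk]
    · simp only [hT, hjk, Ne.symm hjk, if_false, detCMM_apply]
      rw [← AlternatingMap.map_swap _ _ hjk, hS j k]
      congr 1
      ext l
      by_cases h1 : l = k
      · subst h1; simp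
      · by_cases h2 : l = j
        · subst h2; simp [h1, hjk]
        · simp [h1, h2, Equiv.swap_apply_of_ne_of_ne]
  have hzero : ∑ j, ∑ k, T j k = 0 := by
    have h1 : ∑ j, ∑ k, T j k = - ∑ j, ∑ k, T j k := by
      conv_lhs => rw [Finset.sum_comm]
      simp_rw [← Finset.sum_neg_distrib]
      exact Finset.sum_congr rfl fun j _ => Finset.sum_congr rfl fun k _ => hanti k j
    linarith
  have hsplit : ∀ j k, detCMM d (Function.update (Function.update c j w) k
        (if k = j then W j else S j k)) =
      T j k + if k = j then detCMM d (Function.update c j (W j)) else 0 := by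
    intro j k
    by_cases hjk : k = j
    · subst hjk; simp [hT]
    · simp [hT, hjk]
  simp_rw [hsplit, Finset.sum_add_distrib]
  rw [hzero]
  simp

lemma fderiv_space {d : ℕ} {E : Type*} [NormedAddCommGroup E] [NormedSpace ℝ E]
    {g : (Fin d → ℝ) × ℝ → E} (hg : Differentiable ℝ g) (x u : Fin d → ℝ) (t : ℝ) :
    fderiv ℝ (fun y => g (y, t)) x u = fderiv ℝ g (x, t) (u, 0) := by
  have := (hg (x, t)).hasFDerivAt.comp x (hasFDerivAt_prodMk_left (𝕜 := ℝ) x t)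
  have h2 : fderiv ℝ (fun y => g (y, t)) x = _ := this.fderiv
  simp [h2]

lemma hasDerivAt_time {d : ℕ} {E : Type*} [NormedAddCommGroup E] [NormedSpace ℝ E]
    {g : (Fin d → ℝ) × ℝ → E} (hg : Differentiable ℝ g) (x : Fin d → ℝ) (t : ℝ) :
    HasDerivAt (fun s => g (x, s)) (fderiv ℝ g (x, t) (0, 1)) t := by
  have := ((hg (x, t)).hasFDerivAt.comp t (hasFDerivAt_prodMk_right (𝕜 := ℝ) x t)).hasDerivAt
  simpa using! this

lemma det_Dmat {d : ℕ} {φ : (Fin d → ℝ) × ℝ → (Fin d → ℝ)} (hφ : Differentiable ℝ φ)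
    (x : Fin d → ℝ) (t : ℝ) :
    (Dmat (fun y => φ (y, t)) x).det = detFrame φ (spaceDir d) (x, t) := by
  rw [← Matrix.det_transpose]
  change Matrix.det _ = Matrix.det _
  congr 1
  ext k i
  simp [Dmat, spaceDir, fderiv_space hφ]

/-- Cramer's rule, in terms of `detFrame`. -/
lemma adjugate_mulVec_eq {d : ℕ} {φ : (Fin d → ℝ) × ℝ → (Fin d → ℝ)} (hφ : Differentiable ℝ φ)
    (y : Fin d → ℝ) (t : ℝ) (j : Fin d) :
    (Matrix.adjugate (Dmat (fun z => φ (z, t)) y)).mulVec (deriv (fun s => φ (y, s)) t) j =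
      detFrame φ (Function.update (spaceDir d) j (0, 1)) (y, t) := by
  rw [← Matrix.cramer_eq_adjugate_mulVec, Matrix.cramer_apply, ← Matrix.det_transpose,
    (hasDerivAt_time hφ y t).deriv]
  change Matrix.det _ = Matrix.det _
  congr 1
  ext k i
  by_cases h : k = j
  · subst h; simp
  · simp [Dmat, spaceDir, fderiv_space hφ, h]

/-- The pointwise identity `div (adjugate (Dφ) w) = ∂J/∂t`. -/
lemma vdiv_adjugate {d : ℕ} {φ : (Fin d → ℝ) × ℝ → (Fin d → ℝ)} (hφ : ContDiff ℝ 2 φ)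
    (x : Fin d → ℝ) (t : ℝ) :
    vdiv (fun y => (Matrix.adjugate (Dmat (fun z => φ (z, t)) y)).mulVec
        (deriv (fun s => φ (y, s)) t)) x =
      fderiv ℝ (detFrame φ (spaceDir d)) (x, t) (0, 1) := by
  have hd1 : Differentiable ℝ φ := hφ.differentiable (by norm_num)
  have hdF : ∀ a, Differentiable ℝ (detFrame φ a) := fun a =>
    (contDiff_detFrame hφ a).differentiable (by norm_num)
  have hsymm : IsSymmSndFDerivAt ℝ φ (x, t) :=
    hφ.contDiffAt.isSymmSndFDerivAt (by simp)
  have hfun : (fun y => (Matrix.adjugate (Dmat (fun z => φ (z, t)) y)).mulVec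
        (deriv (fun s => φ (y, s)) t)) =
      fun y j => detFrame φ (Function.update (spaceDir d) j (0, 1)) (y, t) := by
    ext y j
    exact adjugate_mulVec_eq hd1 y t j
  have hcomp : ∀ j, DifferentiableAt ℝ
      (fun y => detFrame φ (Function.update (spaceDir d) j (0, 1)) (y, t)) x := fun j =>
    (hdF _ _).comp x (hasFDerivAt_prodMk_left (𝕜 := ℝ) x t).differentiableAt
  rw [hfun, vdiv, fderiv_detFrame_apply hφ]
  have hterm : ∀ j, fderiv ℝ
      (fun y (j : Fin d) => detFrame φ (Function.update (spaceDir d) j (0, 1)) (y, t)) x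
        (Pi.single j 1) j =
      ∑ k, detCMM d (Function.update
        (Function.update (fun k => fderiv ℝ φ (x, t) (spaceDir d k)) j
          (fderiv ℝ φ (x, t) (0, 1))) k
        (if k = j then fderiv ℝ (fderiv ℝ φ) (x, t) (0, 1) (spaceDir d j)
          else fderiv ℝ (fderiv ℝ φ) (x, t) (spaceDir d j) (spaceDir d k))) := by
    intro j
    rw [fderiv_pi hcomp, ContinuousLinearMap.pi_apply, fderiv_space (hdF _),
      fderiv_detFrame_apply hφ]
    refine Finset.sum_congr rfl fun k _ => ?_
    congr 2
    · ext l : 1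
      by_cases h : l = j
      · subst h; simp
      · simp [h]
    · by_cases h : k = j
      · subst h
        simp only [Function.update_self, if_true]
        exact hsymm _ _
      · simp [h, spaceDir]
  simp_rw [hterm]
  exact sum_sum_det_update _ (fun j => fderiv ℝ (fderiv ℝ φ) (x, t) (0, 1) (spaceDir d j)) _
    (fun j k => fderiv ℝ (fderiv ℝ φ) (x, t) (spaceDir d j) (spaceDir d k))
    (fun j k => hsymm _ _)

/-- Differentiation under the integral over a compact set, for a `C¹` integrand. -/
lemma hasDerivAt_setIntegral_of_contDiff {d : ℕ} {G : (Fin d → ℝ) × ℝ → ℝ}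
    (hG : ContDiff ℝ 1 G) {K : Set (Fin d → ℝ)} (hK : IsCompact K) (hKm : MeasurableSet K)
    (t₀ : ℝ) :
    HasDerivAt (fun t => ∫ x in K, G (x, t)) (∫ x in K, fderiv ℝ G (x, t₀) (0, 1)) t₀ := by
  have hcont : Continuous fun p => fderiv ℝ G p (0, 1) :=
    (hG.continuous_fderiv (by norm_num)).clm_apply continuous_const
  obtain ⟨C, hC⟩ := (hK.prod (isCompact_closedBall t₀ 1)).exists_bound_of_continuousOn
    hcont.continuousOn
  refine (hasDerivAt_integral_of_dominated_loc_of_deriv_le (μ := volume.restrict K)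
    (F := fun t x => G (x, t)) (F' := fun t x => fderiv ℝ G (x, t) (0, 1)) (bound := fun _ => C)
    (Metric.closedBall_mem_nhds t₀ one_pos) ?_ ?_ ?_ ?_ ?_ ?_).2
  · refine Filter.Eventually.of_forall fun t => ?_
    exact (hG.continuous.comp (by fun_prop : Continuous fun x => (x, t))).aestronglyMeasurable
  · exact (hG.continuous.comp
      (by fun_prop : Continuous fun x => (x, t₀))).continuousOn.integrableOn_compact hK
  · exact (hcont.comp (by fun_prop : Continuous fun x => (x, t₀))).aestronglyMeasurable
  · exact (ae_restrict_iff' hKm).2 (Filter.Eventually.of_forall fun x hx t ht => hC (x, t) ⟨hx, ht⟩)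
  · exact continuousOn_const.integrableOn_compact hK
  · exact Filter.Eventually.of_forall fun x t _ =>
      hasDerivAt_time (hG.differentiable (by norm_num)) x t

/-- **Reynolds transport theorem pulled back to the referent configuration.** -/
theorem reynolds_transport_referent (d : ℕ) (hd : 1 ≤ d)
    (φ : (Fin d → ℝ) × ℝ → (Fin d → ℝ)) (hφ : ContDiff ℝ 2 φ)
    (f : (Fin d → ℝ) × ℝ → ℝ) (hf : ContDiff ℝ 1 f)
    (K : Set (Fin d → ℝ)) (hK : IsCompact K) (hKm : MeasurableSet K) (t₀ : ℝ) :
    HasDerivAt (fun t => ∫ x in K, f (x, t) * (Dmat (fun y => φ (y, t)) x).det)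
      (∫ x in K, (deriv (fun s => f (x, s)) t₀ * (Dmat (fun y => φ (y, t₀)) x).det
        + f (x, t₀) * vdiv (fun y => (Matrix.adjugate (Dmat (fun z => φ (z, t₀)) y)).mulVec
            (deriv (fun s => φ (y, s)) t₀)) x)) t₀ := by
  have hJ := contDiff_detFrame hφ (spaceDir d)
  have hfd : Differentiable ℝ f := hf.differentiable (by norm_num)
  have hJd := hJ.differentiable (by norm_num)
  simp_rw [det_Dmat (hφ.differentiable (by norm_num)), vdiv_adjugate hφ]
  convert hasDerivAt_setIntegral_of_contDiff (hf.mul hJ) hK hKm t₀ using 1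
  refine setIntegral_congr_fun hKm fun x _ => ?_
  have h1 := (hasDerivAt_time hfd x t₀).mul (hasDerivAt_time hJd x t₀)
  have h2 := hasDerivAt_time (hf.mul hJ |>.differentiable (by norm_num)) x t₀
  have h3 := h1.unique h2
  simp only [(hasDerivAt_time hfd x t₀).deriv]
  exact h3
end

section
/- (Vanishing of the discrete Space Conservation Law for polynomial-in-time ALE maps.) Let d ≥ 1, m ≥ 0, and let u₀, …, u_m : ℝᵈ → ℝᵈ be twice continuously differentiable (ContDiff ℝ 2). Define the ALE map φ : ℝᵈ × ℝ → ℝᵈ by φ(x̂,t) = x̂ + ∑_{k=0}^{m} t^k · u_k(x̂), write ŵ(x̂,t) = ∂φ/∂t(x̂,t) and J(x̂,t) = det Dφ_t(x̂). Then for all real a, b and every x̂ ∈ ℝᵈ, J(x̂,b) − J(x̂,a) = div( x̂ ↦ ∫_a^b adjugate(Dφ_t(x̂)) · ŵ(x̂,t) dt )(x̂), i.e., the time integral of the differential SCL can be evaluated exactly with the divergence taken outside the integral. -/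
/-!
Both sides equal `∫ t in a..b, div (adjugate(Dφ_t) · ŵ(·,t)) dt`.

The integrand `adjugate(Dφ_t(y)) · ŵ(y,t)` is jointly `C¹` in `(y, t)`, so the divergence passes
under the time integral (`hasFDerivAt_intervalIntegral_of_contDiff`). For fixed `t`, the product rule
splits the divergence into two sums. The one containing derivatives of the adjugate vanishes by the
Piola identity (`piola_algebraic`): second derivatives are symmetric, while exchanging two rows of a
determinant changes its sign. The other, `∑ᵢⱼ adjugate(Dφ_t)ᵢⱼ ∂ᵢŵⱼ`, is `∂/∂t det Dφ_t` by Jacobi's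
formula (`hasDerivAt_det`), because `∂/∂t Dφ_t = Dŵ`. This is the differential conservation law
(`vdiv_adjugate_mulVec`), and the fundamental theorem of calculus integrates it in time.
-/

open Matrix MeasureTheory

theorem det_updateRow_eq_sum {d : ℕ} (A : Matrix (Fin d) (Fin d) ℝ) (r : Fin d)
    (v : Fin d → ℝ) :
    (A.updateRow r v).det = ∑ l, v l * (A.updateRow r (Pi.single l 1)).det := by
  have h := (Matrix.detRowAlternating (n := Fin d) (R := ℝ)).toMultilinearMap.map_update_sum
    Finset.univ r (fun l => v l • (Pi.single l 1 : Fin d → ℝ)) A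
  have hv : ∑ l, v l • (Pi.single l 1 : Fin d → ℝ) = v := by
    ext i; simp [Finset.sum_apply, Pi.single_apply]
  rw [hv] at h
  refine h.trans (Finset.sum_congr rfl fun l _ => ?_)
  exact Matrix.det_updateRow_smul A r (v l) _

/-- Jacobi's formula, in the row-by-row form given by multilinearity of the determinant. -/
theorem hasDerivAt_det {d : ℕ} {M : ℝ → Matrix (Fin d) (Fin d) ℝ}
    {M' : Matrix (Fin d) (Fin d) ℝ} {s : ℝ}
    (h : ∀ i j, HasDerivAt (fun s => M s i j) (M' i j) s) :
    HasDerivAt (fun s => (M s).det) (∑ r, ((M s).updateRow r (M' r)).det) s := by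
  let D : ContinuousMultilinearMap ℝ (fun _ : Fin d => Fin d → ℝ) ℝ :=
    { (Matrix.detRowAlternating (n := Fin d) (R := ℝ)).toMultilinearMap with
      cont := Continuous.matrix_det continuous_id }
  have hM : HasDerivAt (fun s => (fun i j => M s i j : Fin d → Fin d → ℝ))
      (fun i j => M' i j) s :=
    hasDerivAt_pi.2 fun i => hasDerivAt_pi.2 fun j => h i j
  have := (D.hasFDerivAt (fun i j => M s i j)).comp_hasDerivAt s hM
  rw [ContinuousMultilinearMap.linearDeriv_apply] at this
  exact this

/-- The `(i, j)` entry of the adjugate is the determinant with row `j` replaced by `eᵢ`; that row is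
constant, so its derivative is `0`. -/
theorem hasDerivAt_adjugate {d : ℕ} {M : ℝ → Matrix (Fin d) (Fin d) ℝ}
    {M' : Matrix (Fin d) (Fin d) ℝ} {s : ℝ}
    (h : ∀ i j, HasDerivAt (fun s => M s i j) (M' i j) s) (i j : Fin d) :
    HasDerivAt (fun s => (M s).adjugate i j)
      (∑ r, (((M s).updateRow j (Pi.single i 1)).updateRow r (M'.updateRow j 0 r)).det) s := by
  simp only [Matrix.adjugate_apply]
  refine hasDerivAt_det (M := fun s => (M s).updateRow j (Pi.single i 1)) fun p q => ?_
  by_cases hp : p = j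
  · subst hp
    simpa using hasDerivAt_const s ((Pi.single i 1 : Fin d → ℝ) q)
  · simpa [Matrix.updateRow_ne hp] using h p q

/-- The algebraic core of the Piola identity `∑ᵢ ∂ᵢ (adjugate Df)ᵢⱼ = 0`, where `H i` plays the role
of `∂ᵢ (Df)`. Expanding row `r` pairs the coefficients `H i r l`, symmetric in `i, l`, with
determinants having rows `j, r` equal to `eᵢ, e_l`, which are antisymmetric in `i, l`. -/
theorem piola_algebraic {d : ℕ} (A : Matrix (Fin d) (Fin d) ℝ)
    (H : Fin d → Matrix (Fin d) (Fin d) ℝ) (hH : ∀ r i l, H i r l = H l r i) (j : Fin d) :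
    ∑ i, ∑ r, ((A.updateRow j (Pi.single i 1)).updateRow r ((H i).updateRow j 0 r)).det = 0 := by
  rw [Finset.sum_comm]
  refine Finset.sum_eq_zero fun r _ => ?_
  by_cases hr : r = j
  · subst hr
    refine Finset.sum_eq_zero fun i _ => Matrix.det_eq_zero_of_row_eq_zero r fun l => ?_
    simp
  · simp only [Matrix.updateRow_ne hr]
    have key : ∀ i l : Fin d,
        ((A.updateRow j (Pi.single i 1)).updateRow r (Pi.single l 1)).det
          = -((A.updateRow j (Pi.single l 1)).updateRow r (Pi.single i 1)).det := by
      intro i l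
      have := (Matrix.detRowAlternating (n := Fin d) (R := ℝ)).map_swap
        ((A.updateRow j (Pi.single l 1)).updateRow r (Pi.single i 1)) hr
      change Matrix.det _ = -Matrix.det _ at this
      rw [← this]
      congr 1
      ext p q
      change _ = ((A.updateRow j (Pi.single l 1)).updateRow r (Pi.single i 1))
        (Equiv.swap r j p) q
      by_cases h1 : p = r
      · subst h1
        simp [Matrix.updateRow_apply, Ne.symm hr]
      · by_cases h2 : p = j
        · subst h2
          simp [Matrix.updateRow_apply, h1]
        · simp [Matrix.updateRow_apply, h1, h2, Equiv.swap_apply_of_ne_of_ne]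
    have e : ∑ i, ((A.updateRow j (Pi.single i 1)).updateRow r (H i r)).det
        = ∑ i, ∑ l, H i r l *
          ((A.updateRow j (Pi.single i 1)).updateRow r (Pi.single l 1)).det :=
      Finset.sum_congr rfl fun i _ => det_updateRow_eq_sum _ r (H i r)
    have e2 : ∑ i, ∑ l, H i r l *
          ((A.updateRow j (Pi.single i 1)).updateRow r (Pi.single l 1)).det
        = -∑ i, ∑ l, H i r l *
          ((A.updateRow j (Pi.single i 1)).updateRow r (Pi.single l 1)).det := by
      conv_lhs => rw [Finset.sum_comm]
      simp only [← Finset.sum_neg_distrib]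
      refine Finset.sum_congr rfl fun l _ => Finset.sum_congr rfl fun i _ => ?_
      rw [key i l, hH r i l]; ring
    rw [e]; linarith

theorem contDiff_det_of_entries {d : ℕ} {E : Type*} [NormedAddCommGroup E] [NormedSpace ℝ E]
    {n : WithTop ℕ∞} {M : E → Matrix (Fin d) (Fin d) ℝ}
    (h : ∀ i j, ContDiff ℝ n fun x => M x i j) : ContDiff ℝ n fun x => (M x).det := by
  simp only [Matrix.det_apply']
  exact ContDiff.sum fun σ _ => contDiff_const.mul (contDiff_prod fun i _ => h _ _)

theorem contDiff_adjugate_of_entries {d : ℕ} {E : Type*} [NormedAddCommGroup E]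
    [NormedSpace ℝ E] {n : WithTop ℕ∞} {M : E → Matrix (Fin d) (Fin d) ℝ}
    (h : ∀ i j, ContDiff ℝ n fun x => M x i j) (i j : Fin d) :
    ContDiff ℝ n fun x => (M x).adjugate i j := by
  simp only [Matrix.adjugate_apply]
  refine contDiff_det_of_entries fun p q => ?_
  by_cases hp : p = j
  · subst hp
    simpa using contDiff_const
  · simpa [Matrix.updateRow_ne hp] using h p q

/-- Differentiation under the integral sign for a jointly `C¹` integrand. The dominating constant
bounds the derivative on the compact set `closedBall x 1 ×ˢ [[a, b]]`. -/
theorem hasFDerivAt_intervalIntegral_of_contDiff {E F : Type*}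
    [NormedAddCommGroup E] [NormedSpace ℝ E] [ProperSpace E]
    [NormedAddCommGroup F] [NormedSpace ℝ F]
    {G : E × ℝ → F} (hG : ContDiff ℝ 1 G) (a b : ℝ) (x : E) :
    Continuous (fun t => fderiv ℝ (fun y => G (y, t)) x) ∧
    HasFDerivAt (fun y => ∫ t in a..b, G (y, t))
      (∫ t in a..b, fderiv ℝ (fun y => G (y, t)) x) x := by
  have hd : ∀ y t, HasFDerivAt (fun y => G (y, t))
      ((fderiv ℝ G (y, t)).comp (ContinuousLinearMap.inl ℝ E ℝ)) y := fun y t =>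
    ((hG.differentiable one_ne_zero (y, t)).hasFDerivAt).comp y
      (hasFDerivAt_prodMk_left y t)
  have hc : Continuous fun p : E × ℝ =>
      (fderiv ℝ G p).comp (ContinuousLinearMap.inl ℝ E ℝ) :=
    (hG.continuous_fderiv one_ne_zero).clm_comp continuous_const
  have hf : ∀ t, fderiv ℝ (fun y => G (y, t)) x =
      (fderiv ℝ G (x, t)).comp (ContinuousLinearMap.inl ℝ E ℝ) := fun t => (hd x t).fderiv
  simp only [hf]
  have hcx : Continuous fun t : ℝ =>
      (fderiv ℝ G (x, t)).comp (ContinuousLinearMap.inl ℝ E ℝ) :=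
    hc.comp (Continuous.prodMk_right x)
  refine ⟨hcx, ?_⟩
  obtain ⟨C, hC⟩ := ((isCompact_closedBall x 1).prod
    (isCompact_uIcc (a := a) (b := b))).exists_bound_of_continuousOn hc.continuousOn
  refine intervalIntegral.hasFDerivAt_integral_of_dominated_of_fderiv_le (bound := fun _ => C)
    (F' := fun y t => (fderiv ℝ G (y, t)).comp (ContinuousLinearMap.inl ℝ E ℝ))
    (Metric.closedBall_mem_nhds x one_pos) ?_ ?_ ?_ ?_ ?_ ?_
  · exact Filter.Eventually.of_forall fun y =>
      (hG.continuous.comp (Continuous.prodMk_right y)).aestronglyMeasurable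
  · exact (hG.continuous.comp (Continuous.prodMk_right x)).intervalIntegrable _ _
  · exact hcx.aestronglyMeasurable
  · exact Filter.Eventually.of_forall fun t ht y hy =>
      hC (y, t) ⟨hy, Set.uIoc_subset_uIcc ht⟩
  · exact intervalIntegrable_const
  · exact Filter.Eventually.of_forall fun t _ y _ => hd y t

/-- The divergence of `adjugate(Df) · w` is the derivative of `det` at `Df` in the direction `Dw`:
by the product rule, the terms differentiating the adjugate drop out by the Piola identity. -/
theorem vdiv_adjugate_mulVec {d : ℕ} {f w : (Fin d → ℝ) → (Fin d → ℝ)}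
    (hf : ContDiff ℝ 2 f) (hw : ContDiff ℝ 1 w) (x : Fin d → ℝ) :
    vdiv (fun y => (Dmat f y).adjugate.mulVec (w y)) x
      = ∑ r, ((Dmat f x).updateRow r (Dmat w x r)).det := by
  have hD : ∀ i j, ContDiff ℝ 1 fun y => Dmat f y i j := fun i j => by
    have h1 : ContDiff ℝ 1 (fderiv ℝ f) := hf.fderiv_right (by norm_num)
    exact contDiff_pi.1 (h1.clm_apply contDiff_const) i
  have hadj := contDiff_adjugate_of_entries hD
  have hG : ContDiff ℝ 1 fun y => (Dmat f y).adjugate.mulVec (w y) := by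
    refine contDiff_pi.2 fun i => ?_
    simp only [Matrix.mulVec, dotProduct]
    exact ContDiff.sum fun j _ => (hadj i j).mul (contDiff_pi.1 hw j)
  -- All directional derivatives are computed along the lines `s ↦ x + s • v`, at `s = 0`.
  have hline : ∀ {F : Type} [NormedAddCommGroup F] [NormedSpace ℝ F] {g : (Fin d → ℝ) → F},
      ContDiff ℝ 1 g → ∀ v, HasDerivAt (fun s : ℝ => g (x + s • v)) (fderiv ℝ g x v) 0 := by
    intro F _ _ g hg v
    have h0 : HasDerivAt (fun s : ℝ => x + s • v) v 0 := by
      simpa using ((hasDerivAt_id (0 : ℝ)).smul_const v).const_add x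
    have hg' : HasFDerivAt g (fderiv ℝ g x) (x + (0 : ℝ) • v) := by
      simpa using (hg.differentiable one_ne_zero x).hasFDerivAt
    exact hg'.comp_hasDerivAt (0 : ℝ) h0
  -- `H i` is the partial derivative `∂ᵢ (Df)` at `x`; it collects the second derivatives of `f`.
  let H : Fin d → Matrix (Fin d) (Fin d) ℝ := fun i =>
    Matrix.of fun r l => fderiv ℝ (fderiv ℝ f) x (Pi.single i 1) (Pi.single l 1) r
  have hH : ∀ r i l, H i r l = H l r i := fun r i l =>
    congrFun ((hf.contDiffAt.isSymmSndFDerivAt (by simp)) (Pi.single i 1) (Pi.single l 1)) r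
  have hDH : ∀ i r l, HasDerivAt (fun s : ℝ => Dmat f (x + s • Pi.single i 1) r l)
      (H i r l) 0 := fun i r l => by
    have h1 : ContDiff ℝ 1 (fderiv ℝ f) := hf.fderiv_right (by norm_num)
    have h2 := (hline h1 (Pi.single i 1)).clm_apply
      (hasDerivAt_const (0 : ℝ) (Pi.single l 1 : Fin d → ℝ))
    have h3 := hasDerivAt_pi.1 h2 r
    simp only [map_zero, add_zero] at h3
    exact h3
  have hcomp : ∀ i, fderiv ℝ (fun y => (Dmat f y).adjugate.mulVec (w y)) x (Pi.single i 1) i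
      = ∑ j, ((∑ r, (((Dmat f x).updateRow j (Pi.single i 1)).updateRow r
            ((H i).updateRow j 0 r)).det) * w x j
          + (Dmat f x).adjugate i j * Dmat w x j i) := by
    intro i
    have h1 := hasDerivAt_pi.1 (hline hG (Pi.single i 1)) i
    have h2 : HasDerivAt (fun s : ℝ => ∑ j, (Dmat f (x + s • Pi.single i 1)).adjugate i j
          * w (x + s • Pi.single i 1) j) _ 0 :=
      HasDerivAt.fun_sum fun j _ => (hasDerivAt_adjugate (hDH i) i j).mul
        (hasDerivAt_pi.1 (hline hw (Pi.single i 1)) j)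
    rw [h1.unique h2]
    simp [Dmat]
  unfold vdiv
  simp only [hcomp, Finset.sum_add_distrib]
  have z : ∑ i, ∑ j, (∑ r, (((Dmat f x).updateRow j (Pi.single i 1)).updateRow r
            ((H i).updateRow j 0 r)).det) * w x j = 0 := by
    rw [Finset.sum_comm]
    refine Finset.sum_eq_zero fun j _ => ?_
    rw [← Finset.sum_mul, piola_algebraic _ H hH j, zero_mul]
  rw [z, zero_add, Finset.sum_comm]
  refine Finset.sum_congr rfl fun r _ => ?_
  rw [det_updateRow_eq_sum]
  refine Finset.sum_congr rfl fun l _ => ?_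
  rw [Matrix.adjugate_apply, mul_comm]

/-- **Vanishing of the discrete Space Conservation Law** for ALE maps that are polynomial
in time: the increment of the Jacobian over a time step equals the divergence of the
exactly integrated field `adjugate(Dφ_t) · ŵ(·,t)`. -/
theorem discrete_SCL_vanishes (d m : ℕ) (hd : 1 ≤ d)
    (u : Fin (m + 1) → (Fin d → ℝ) → (Fin d → ℝ))
    (hu : ∀ k, ContDiff ℝ 2 (u k))
    (φ : (Fin d → ℝ) × ℝ → (Fin d → ℝ))
    (hφ : ∀ (x : Fin d → ℝ) (t : ℝ), φ (x, t) = x + ∑ k : Fin (m + 1), t ^ (k : ℕ) • u k x)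
    (a b : ℝ) (xh : Fin d → ℝ) :
    (Dmat (fun x => φ (x, b)) xh).det - (Dmat (fun x => φ (x, a)) xh).det
      = vdiv (fun y => ∫ t in a..b,
          (Matrix.adjugate (Dmat (fun x => φ (x, t)) y)).mulVec
            (deriv (fun s => φ (y, s)) t)) xh := by
  have hu1 : ∀ k, ContDiff ℝ 1 (u k) := fun k => (hu k).of_le (by norm_num)
  have hfu : ∀ k, ContDiff ℝ 1 (fderiv ℝ (u k)) := fun k =>
    (hu k).fderiv_right (by norm_num)
  have hud : ∀ k y, HasFDerivAt (u k) (fderiv ℝ (u k) y) y := fun k y =>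
    ((hu1 k).differentiable one_ne_zero y).hasFDerivAt
  -- The mesh velocity `∂φ/∂t`; the `k = 0` term vanishes because of its coefficient `k`.
  let w : ℝ → (Fin d → ℝ) → (Fin d → ℝ) := fun t y =>
    ∑ k : Fin (m + 1), (((k : ℕ) : ℝ) * t ^ ((k : ℕ) - 1)) • u k y
  have hw : ∀ y t, deriv (fun s => φ (y, s)) t = w t y := fun y t => by
    simp only [hφ]
    refine HasDerivAt.deriv (HasDerivAt.const_add y (HasDerivAt.fun_sum fun k _ => ?_))
    exact (hasDerivAt_pow (k : ℕ) t).smul_const (u k y)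
  have hφ2 : ∀ t, ContDiff ℝ 2 fun x => φ (x, t) := fun t => by
    simp only [hφ]
    exact contDiff_id.add (ContDiff.sum fun k _ => (hu k).const_smul _)
  have hDφ : ∀ t y i j, Dmat (fun x => φ (x, t)) y i j = (Pi.single j 1 : Fin d → ℝ) i
      + ∑ k : Fin (m + 1), t ^ (k : ℕ) * fderiv ℝ (u k) y (Pi.single j 1) i := by
    intro t y i j
    simp only [hφ, Dmat, Matrix.of_apply]
    have h : HasFDerivAt (fun x => x + ∑ k : Fin (m + 1), t ^ (k : ℕ) • u k x)
        (ContinuousLinearMap.id ℝ (Fin d → ℝ)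
          + ∑ k : Fin (m + 1), t ^ (k : ℕ) • fderiv ℝ (u k) y) y :=
      (hasFDerivAt_id y).add (HasFDerivAt.fun_sum fun k _ => (hud k y).fun_const_smul _)
    rw [h.fderiv]
    simp [Finset.sum_apply]
  have hw1 : ∀ t, ContDiff ℝ 1 (w t) := fun t =>
    ContDiff.sum fun k _ => (hu1 k).const_smul _
  have hDw : ∀ t y i j, Dmat (w t) y i j
      = ∑ k : Fin (m + 1), (((k : ℕ) : ℝ) * t ^ ((k : ℕ) - 1))
          * fderiv ℝ (u k) y (Pi.single j 1) i := by
    intro t y i j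
    simp only [Dmat, Matrix.of_apply]
    have h : HasFDerivAt (w t)
        (∑ k : Fin (m + 1), (((k : ℕ) : ℝ) * t ^ ((k : ℕ) - 1)) • fderiv ℝ (u k) y) y :=
      HasFDerivAt.fun_sum fun k _ => (hud k y).fun_const_smul _
    rw [h.fderiv]
    simp [Finset.sum_apply]
  let G : (Fin d → ℝ) × ℝ → (Fin d → ℝ) := fun p =>
    (Dmat (fun x => φ (x, p.2)) p.1).adjugate.mulVec (w p.2 p.1)
  have hG : ContDiff ℝ 1 G := by
    refine contDiff_pi.2 fun i => ?_
    simp only [G, Matrix.mulVec, dotProduct]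
    refine ContDiff.sum fun j _ => ContDiff.mul ?_ ?_
    · refine contDiff_adjugate_of_entries
        (M := fun p : (Fin d → ℝ) × ℝ => Dmat (fun x => φ (x, p.2)) p.1) (fun r l => ?_) i j
      simp only [hDφ]
      refine contDiff_const.add (ContDiff.sum fun k _ => (contDiff_snd.pow _).mul ?_)
      exact contDiff_pi.1 (((hfu k).comp contDiff_fst).clm_apply contDiff_const) r
    · simp only [w, Finset.sum_apply, Pi.smul_apply, smul_eq_mul]
      refine ContDiff.sum fun k _ => (contDiff_const.mul (contDiff_snd.pow _)).mul ?_
      exact contDiff_pi.1 ((hu1 k).comp contDiff_fst) j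
  obtain ⟨hcont, hint⟩ := hasFDerivAt_intervalIntegral_of_contDiff hG a b xh
  have hdet : ∀ t, HasDerivAt (fun t => (Dmat (fun x => φ (x, t)) xh).det)
      (vdiv (fun y => G (y, t)) xh) t := fun t => by
    rw [show vdiv (fun y => G (y, t)) xh = _ from vdiv_adjugate_mulVec (hφ2 t) (hw1 t) xh]
    refine hasDerivAt_det (M := fun t => Dmat (fun x => φ (x, t)) xh) fun i j => ?_
    simp only [hDφ, hDw]
    exact HasDerivAt.const_add _ (HasDerivAt.fun_sum fun k _ =>
      (hasDerivAt_pow (k : ℕ) t).mul_const _)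
  have hci : ∀ i, Continuous fun t =>
      fderiv ℝ (fun y => G (y, t)) xh (Pi.single i 1) i := fun i =>
    (continuous_apply i).comp (hcont.clm_apply continuous_const)
  have hcd : Continuous fun t => vdiv (fun y => G (y, t)) xh :=
    continuous_finsetSum _ fun i _ => hci i
  rw [← intervalIntegral.integral_eq_sub_of_hasDerivAt (fun t _ => hdet t)
    (hcd.intervalIntegrable a b)]
  simp only [hw]
  change _ = vdiv (fun y => ∫ t in a..b, G (y, t)) xh
  unfold vdiv
  rw [hint.fderiv, intervalIntegral.integral_finsetSum fun i _ =>
    (hci i).intervalIntegrable a b]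
  refine Finset.sum_congr rfl fun i _ => ?_
  -- Evaluation at a basis vector followed by a coordinate is a continuous linear functional.
  exact ContinuousLinearMap.intervalIntegral_comp_comm
    ((ContinuousLinearMap.proj (R := ℝ) (φ := fun _ : Fin d => ℝ) i).comp
      (ContinuousLinearMap.apply ℝ (Fin d → ℝ) (Pi.single i 1 : Fin d → ℝ)))
    (hcont.intervalIntegrable a b)
end

section
/- (Vanishing of the discrete weak-form Space Conservation Law.) Let d ≥ 1, m ≥ 0, and let u₀, …, u_m : ℝᵈ → ℝᵈ be twice continuously differentiable (ContDiff ℝ 2). Define φ : ℝᵈ × ℝ → ℝᵈ by φ(x̂,t) = x̂ + ∑_{k=0}^{m} t^k · u_k(x̂), write ŵ(x̂,t) = ∂φ/∂t(x̂,t) and J(x̂,t) = det Dφ_t(x̂). Let K̂ ⊆ ℝᵈ be compact and measurable and let ψ̂ : ℝᵈ → ℝ be continuous. Then for all real a, b, ∫_{K̂} ψ̂(x̂) · ( J(x̂,b) − J(x̂,a) ) dx̂ = ∫_{K̂} ψ̂(x̂) · div( x̂ ↦ ∫_a^b adjugate(Dφ_t(x̂)) · ŵ(x̂,t) dt )(x̂)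 dx̂. -/
/-!
The two integrands agree pointwise, because `div ∫ₐᵇ adj(Dφ_t) w dt = J(·, b) - J(·, a)`.

Regard `φ` as a `C²` map on space-time, with spatial partial derivatives `∂₁φ, …, ∂_dφ` (the columns
of `Dφ_t`) and time derivative `w`. By Cramer's rule the `i`-th component of `adj(Dφ_t) w` is the
determinant of the columns `∂₁φ, …, ∂_dφ` with the `i`-th one replaced by `w`. Differentiating it
in the direction `i` and summing over `i` gives two kinds of terms:

* those where the column `w` is differentiated; since `∂ᵢw = ∂ₜ∂ᵢφ`, they add up to `∂ₜ J`
  (Jacobi's formula);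
* for each pair `i ≠ c`, the determinant with column `i` equal to `w` and column `c` equal to
  `∂ᵢ∂_cφ`; exchanging `i` and `c` swaps two columns, so these terms cancel in pairs
  (this is the Piola identity `div adj(Dφ)ᵀ = 0`).

This is `sum_fderiv_flux`. The result follows by differentiating under the time integral
(`hasFDerivAt_intervalIntegral_of_contDiff`) and the fundamental theorem of calculus.
-/

open Matrix MeasureTheory

namespace SCL

/-- The determinant as a continuous multilinear function of `d` vectors of `ℝᵈ`. -/
noncomputable def detCMM (d : ℕ) :
    ContinuousMultilinearMap ℝ (fun _ : Fin d => Fin d → ℝ) ℝ where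
  toMultilinearMap := (Matrix.detRowAlternating (R := ℝ) (n := Fin d)).toMultilinearMap
  cont := Continuous.matrix_det (A := fun v : Fin d → Fin d → ℝ => Matrix.of v) continuous_id

lemma detCMM_apply {d : ℕ} (v : Fin d → Fin d → ℝ) : detCMM d v = (Matrix.of v).det := rfl

/-- Exchanging the roles of two positions `i ≠ j` that hold the vectors `x` and `y` changes the
sign of the determinant. -/
lemma detCMM_update_swap {d : ℕ} (v : Fin d → Fin d → ℝ) {i j : Fin d} (hij : i ≠ j)
    (x y : Fin d → ℝ) :
    detCMM d (Function.update (Function.update v i x) j y)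
      = - detCMM d (Function.update (Function.update v j x) i y) := by
  have h := (Matrix.detRowAlternating (R := ℝ) (n := Fin d)).map_swap
    (Function.update (Function.update v j x) i y) hij
  have e : Function.update (Function.update v j x) i y ∘ Equiv.swap i j
      = Function.update (Function.update v i x) j y := by
    funext k
    rcases eq_or_ne k i with rfl | hki
    · simp [hij, hij.symm]
    · rcases eq_or_ne k j with rfl | hkj
      · simp
      · simp [Equiv.swap_apply_of_ne_of_ne hki hkj, hki, hkj]
  rw [e] at h
  exact h

/-- The spatial coordinate direction `i` in space-time. -/
def dirX {d : ℕ} (i : Fin d) : (Fin d → ℝ) × ℝ := (Pi.single i 1, 0)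

/-- The time direction in space-time. -/
def dirT {d : ℕ} : (Fin d → ℝ) × ℝ := (0, 1)

/-- The family of spatial partial derivatives of `φ`, that is, the columns of `Dφ_t`. -/
noncomputable def cols {d : ℕ} (φ : (Fin d → ℝ) × ℝ → (Fin d → ℝ)) (p : (Fin d → ℝ) × ℝ) :
    Fin d → Fin d → ℝ := fun i => fderiv ℝ φ p (dirX i)

/-- The flux `adj(Dφ_t) ∂ₜφ`, written with Cramer's rule: its `i`-th component is the determinant
of the spatial partial derivatives, the `i`-th one replaced by the time derivative. -/
noncomputable def flux {d : ℕ} (φ : (Fin d → ℝ) × ℝ → (Fin d → ℝ)) (p : (Fin d → ℝ) × ℝ) :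
    Fin d → ℝ :=
  fun i => detCMM d (Function.update (cols φ p) i (fderiv ℝ φ p dirT))

section
variable {d : ℕ} {φ : (Fin d → ℝ) × ℝ → (Fin d → ℝ)}

lemma hasFDerivAt_fderiv_apply (hφ : ContDiff ℝ 2 φ) (p v : (Fin d → ℝ) × ℝ) :
    HasFDerivAt (fun q => fderiv ℝ φ q v) ((fderiv ℝ (fderiv ℝ φ) p).flip v) p := by
  have h : DifferentiableAt ℝ (fderiv ℝ φ) p :=
    ((hφ.fderiv_right (m := 1) (by norm_num)).differentiable (by norm_num)) p
  simpa using h.hasFDerivAt.clm_apply (hasFDerivAt_const v p)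

lemma contDiff_fderiv_apply (hφ : ContDiff ℝ 2 φ) (v : (Fin d → ℝ) × ℝ) :
    ContDiff ℝ 1 (fun q => fderiv ℝ φ q v) :=
  (hφ.fderiv_right (m := 1) (by norm_num)).clm_apply contDiff_const

lemma contDiff_cols (hφ : ContDiff ℝ 2 φ) : ContDiff ℝ 1 (cols φ) :=
  contDiff_pi.2 fun i => contDiff_fderiv_apply hφ (dirX i)

lemma contDiff_flux (hφ : ContDiff ℝ 2 φ) : ContDiff ℝ 1 (flux φ) := by
  refine contDiff_pi.2 fun i => (detCMM d).contDiff.comp (contDiff_pi.2 fun c => ?_)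
  rcases eq_or_ne c i with rfl | hc
  · simpa using contDiff_fderiv_apply hφ dirT
  · simpa [hc, cols] using contDiff_fderiv_apply hφ (dirX c)

lemma contDiff_detCMM_cols (hφ : ContDiff ℝ 2 φ) : ContDiff ℝ 1 (fun p => detCMM d (cols φ p)) :=
  (detCMM d).contDiff.comp (contDiff_cols hφ)

/-- Jacobi's formula for the derivative of the Jacobian determinant in a space-time direction. -/
lemma fderiv_detCMM_cols (hφ : ContDiff ℝ 2 φ) (p v : (Fin d → ℝ) × ℝ) :
    fderiv ℝ (fun p => detCMM d (cols φ p)) p v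
      = ∑ i, detCMM d (Function.update (cols φ p) i (fderiv ℝ (fderiv ℝ φ) p v (dirX i))) := by
  have h1 : HasFDerivAt (cols φ)
      (ContinuousLinearMap.pi fun i => (fderiv ℝ (fderiv ℝ φ) p).flip (dirX i)) p :=
    hasFDerivAt_pi.2 fun i => hasFDerivAt_fderiv_apply hφ p (dirX i)
  have h2 := ((detCMM d).hasFDerivAt (cols φ p)).comp p h1
  have h3 := h2.fderiv
  rw [Function.comp_def] at h3
  rw [h3]
  simp [ContinuousMultilinearMap.linearDeriv_apply]

lemma fderiv_flux (hφ : ContDiff ℝ 2 φ) (p v : (Fin d → ℝ) × ℝ) (i : Fin d) :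
    fderiv ℝ (flux φ) p v i
      = ∑ c, if c = i then
          detCMM d (Function.update (cols φ p) i (fderiv ℝ (fderiv ℝ φ) p v dirT))
        else detCMM d (Function.update (Function.update (cols φ p) i (fderiv ℝ φ p dirT)) c
          (fderiv ℝ (fderiv ℝ φ) p v (dirX c))) := by
  have h1 : HasFDerivAt (fun q => Function.update (cols φ q) i (fderiv ℝ φ q dirT))
      (ContinuousLinearMap.pi fun c =>
        (fderiv ℝ (fderiv ℝ φ) p).flip (if c = i then dirT else dirX c)) p := by
    refine hasFDerivAt_pi.2 fun c => ?_
    rcases eq_or_ne c i with rfl | hc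
    · simpa using hasFDerivAt_fderiv_apply hφ p dirT
    · simpa [hc, cols] using hasFDerivAt_fderiv_apply hφ p (dirX c)
  have h2 := (((detCMM d).hasFDerivAt _).comp p h1).fderiv
  have h3 : HasFDerivAt (flux φ) (fderiv ℝ (flux φ) p) p :=
    ((contDiff_flux hφ).differentiable (by norm_num) p).hasFDerivAt
  have h4 := (hasFDerivAt_pi'.1 h3 i).fderiv
  have h5 : fderiv ℝ (flux φ) p v i = fderiv ℝ (fun q => flux φ q i) p v := by
    rw [h4]; rfl
  rw [h5]
  rw [Function.comp_def] at h2
  unfold flux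
  rw [h2]
  simp only [ContinuousLinearMap.comp_apply, ContinuousMultilinearMap.linearDeriv_apply,
    ContinuousLinearMap.pi_apply, ContinuousLinearMap.flip_apply]
  refine Finset.sum_congr rfl fun c _ => ?_
  split_ifs with hc
  · subst hc; simp
  · rfl

/-- The space conservation law in differential form: the spatial divergence of the flux is the
time derivative of the Jacobian determinant. -/
lemma sum_fderiv_flux (hφ : ContDiff ℝ 2 φ) (p : (Fin d → ℝ) × ℝ) :
    ∑ i, fderiv ℝ (flux φ) p (dirX i) i
      = fderiv ℝ (fun p => detCMM d (cols φ p)) p dirT := by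
  have hs : ∀ v w, fderiv ℝ (fderiv ℝ φ) p v w = fderiv ℝ (fderiv ℝ φ) p w v :=
    fun v w => (hφ.contDiffAt.isSymmSndFDerivAt (by simp)) v w
  simp_rw [fderiv_flux hφ, fderiv_detCMM_cols hφ]
  -- `G i c` is the term in which the column `c ≠ i` of the `i`-th component is differentiated.
  set G : Fin d → Fin d → ℝ := fun i c => if c = i then 0 else
    detCMM d (Function.update (Function.update (cols φ p) i (fderiv ℝ φ p dirT)) c
          (fderiv ℝ (fderiv ℝ φ) p (dirX i) (dirX c))) with hG
  have hanti : ∀ i c, G i c = - G c i := by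
    intro i c
    rcases eq_or_ne c i with rfl | hc
    · simp [hG]
    · simp only [hG, hc, hc.symm, if_false]
      rw [detCMM_update_swap _ hc.symm, hs]
  have hzero : ∑ i, ∑ c, G i c = 0 := by
    have h : ∑ i, ∑ c, G i c = - ∑ i, ∑ c, G i c := by
      conv_lhs => rw [Finset.sum_comm]
      simp_rw [← Finset.sum_neg_distrib]
      exact Finset.sum_congr rfl fun i _ => Finset.sum_congr rfl fun c _ => hanti c i
    linarith
  rw [← sub_eq_zero, ← Finset.sum_sub_distrib, ← hzero]
  refine Finset.sum_congr rfl fun i _ => ?_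
  rw [sub_eq_iff_eq_add, ← Finset.sum_erase_add _ _ (Finset.mem_univ i),
    ← Finset.sum_erase_add (a := i) (f := G i) _ (Finset.mem_univ i)]
  have e : G i i = 0 := by simp [hG]
  rw [e, hs dirT, if_pos rfl, add_zero]
  congr 1
  refine Finset.sum_congr rfl fun c hc => ?_
  simp [hG, Finset.ne_of_mem_erase hc]

/-- Differentiation under the integral sign for a jointly `C¹` integrand over a bounded interval. -/
lemma hasFDerivAt_intervalIntegral_of_contDiff {F : (Fin d → ℝ) × ℝ → (Fin d → ℝ)}
    (hF : ContDiff ℝ 1 F) (a b : ℝ) (x : Fin d → ℝ) :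
    HasFDerivAt (fun y => ∫ t in a..b, F (y, t))
      (∫ t in a..b, (fderiv ℝ F (x, t)).comp (ContinuousLinearMap.inl ℝ (Fin d → ℝ) ℝ)) x := by
  have hF' : Continuous fun q : (Fin d → ℝ) × ℝ =>
      (fderiv ℝ F q).comp (ContinuousLinearMap.inl ℝ (Fin d → ℝ) ℝ) :=
    (hF.continuous_fderiv (by norm_num)).clm_comp continuous_const
  have hFc := hF.continuous
  -- The derivative is bounded by a constant on the compact set `closedBall x 1 × [a, b]`.
  obtain ⟨C, hC⟩ := ((isCompact_closedBall x 1).prod (isCompact_uIcc (a := a) (b := b))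
    ).exists_bound_of_continuousOn hF'.continuousOn
  refine intervalIntegral.hasFDerivAt_integral_of_dominated_of_fderiv_le
    (F := fun y t => F (y, t))
    (F' := fun y t => (fderiv ℝ F (y, t)).comp (ContinuousLinearMap.inl ℝ (Fin d → ℝ) ℝ))
    (bound := fun _ => C) (Metric.closedBall_mem_nhds x one_pos) ?_ ?_ ?_ ?_ ?_ ?_
  · exact Filter.Eventually.of_forall fun y =>
      (hFc.comp (Continuous.prodMk_right y)).aestronglyMeasurable
  · exact (hFc.comp (Continuous.prodMk_right x)).intervalIntegrable a b
  · exact (hF'.comp (Continuous.prodMk_right x)).aestronglyMeasurable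
  · exact Filter.Eventually.of_forall fun t ht y hy =>
      hC (y, t) ⟨hy, Set.uIoc_subset_uIcc ht⟩
  · exact intervalIntegrable_const
  · refine Filter.Eventually.of_forall fun t _ y _ => ?_
    exact ((hF.differentiable (by norm_num)) (y, t)).hasFDerivAt.comp y
      (hasFDerivAt_prodMk_left y t)

lemma vdiv_integral_flux (hφ : ContDiff ℝ 2 φ) (a b : ℝ) (x : Fin d → ℝ) :
    vdiv (fun y => ∫ t in a..b, flux φ (y, t)) x
      = detCMM d (cols φ (x, b)) - detCMM d (cols φ (x, a)) := by
  have hF := contDiff_flux hφ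
  have hF' : Continuous fun t : ℝ =>
      (fderiv ℝ (flux φ) (x, t)).comp (ContinuousLinearMap.inl ℝ (Fin d → ℝ) ℝ) :=
    ((hF.continuous_fderiv (by norm_num)).comp (Continuous.prodMk_right x)).clm_comp
      continuous_const
  have hint : ∀ i : Fin d,
      (∫ t in a..b, (fderiv ℝ (flux φ) (x, t)).comp (ContinuousLinearMap.inl ℝ (Fin d → ℝ) ℝ))
        (Pi.single i 1) i = ∫ t in a..b, fderiv ℝ (flux φ) (x, t) (dirX i) i := by
    intro i
    -- Evaluation at `eᵢ` followed by the `i`-th coordinate is continuous linear.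
    have h := ((ContinuousLinearMap.proj (R := ℝ) (φ := fun _ : Fin d => ℝ) i).comp
      (ContinuousLinearMap.apply ℝ (Fin d → ℝ) (Pi.single i (1 : ℝ) : Fin d → ℝ))
      ).intervalIntegral_comp_comm (hF'.intervalIntegrable (μ := volume) a b)
    exact h.symm
  have hcont : ∀ i : Fin d, Continuous fun t : ℝ => fderiv ℝ (flux φ) (x, t) (dirX i) i :=
    fun i => (continuous_apply i).comp (((hF.continuous_fderiv (by norm_num)).comp
      (Continuous.prodMk_right x)).clm_apply continuous_const)
  unfold vdiv
  rw [(hasFDerivAt_intervalIntegral_of_contDiff hF a b x).fderiv]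
  simp_rw [hint]
  rw [← intervalIntegral.integral_finsetSum fun i _ => (hcont i).intervalIntegrable a b]
  simp_rw [sum_fderiv_flux hφ]
  have hJ := contDiff_detCMM_cols hφ
  refine intervalIntegral.integral_eq_sub_of_hasDerivAt
    (f := fun t => detCMM d (cols φ (x, t))) (fun t _ => ?_) ?_
  · exact ((hJ.differentiable (by norm_num)) (x, t)).hasFDerivAt.comp_hasDerivAt t
      ((hasDerivAt_const t x).prodMk (hasDerivAt_id t))
  · exact (((hJ.continuous_fderiv (by norm_num)).comp
      (Continuous.prodMk_right x)).clm_apply continuous_const).intervalIntegrable a b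

lemma Dmat_eq (hφ : ContDiff ℝ 2 φ) (x : Fin d → ℝ) (t : ℝ) :
    Dmat (fun y => φ (y, t)) x = (Matrix.of (cols φ (x, t)))ᵀ := by
  have h : fderiv ℝ (fun y => φ (y, t)) x
      = (fderiv ℝ φ (x, t)).comp (ContinuousLinearMap.inl ℝ (Fin d → ℝ) ℝ) := by
    refine HasFDerivAt.fderiv ?_
    exact ((hφ.differentiable (by norm_num)) (x, t)).hasFDerivAt.comp x
      (hasFDerivAt_prodMk_left x t)
  ext i j
  simp [Dmat, h, cols, dirX]

lemma det_Dmat (hφ : ContDiff ℝ 2 φ) (x : Fin d → ℝ) (t : ℝ) :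
    (Dmat (fun y => φ (y, t)) x).det = detCMM d (cols φ (x, t)) := by
  rw [Dmat_eq hφ, Matrix.det_transpose, detCMM_apply]

lemma adjugate_mulVec_eq_flux (hφ : ContDiff ℝ 2 φ) (x : Fin d → ℝ) (t : ℝ) :
    (Matrix.adjugate (Dmat (fun z => φ (z, t)) x)).mulVec (deriv (fun s => φ (x, s)) t)
      = flux φ (x, t) := by
  have h : deriv (fun s => φ (x, s)) t = fderiv ℝ φ (x, t) dirT :=
    (((hφ.differentiable (by norm_num)) (x, t)).hasFDerivAt.comp_hasDerivAt t
      ((hasDerivAt_const t x).prodMk (hasDerivAt_id t))).deriv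
  rw [Dmat_eq hφ, h, ← Matrix.cramer_eq_adjugate_mulVec]
  ext i
  rw [Matrix.cramer_transpose_apply]
  rfl

end

end SCL

/-- **Vanishing of the discrete weak-form Space Conservation Law** for ALE maps that are
polynomial in time. -/
theorem discrete_weak_SCL_vanishes (d m : ℕ) (hd : 1 ≤ d)
    (u : Fin (m + 1) → (Fin d → ℝ) → (Fin d → ℝ))
    (hu : ∀ k, ContDiff ℝ 2 (u k))
    (φ : (Fin d → ℝ) × ℝ → (Fin d → ℝ))
    (hφ : ∀ (x : Fin d → ℝ) (t : ℝ), φ (x, t) = x + ∑ k : Fin (m + 1), t ^ (k : ℕ) • u k x)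
    (K : Set (Fin d → ℝ)) (hK : IsCompact K) (hKm : MeasurableSet K)
    (ψ : (Fin d → ℝ) → ℝ) (hψ : Continuous ψ) (a b : ℝ) :
    ∫ x in K, ψ x * ((Dmat (fun y => φ (y, b)) x).det - (Dmat (fun y => φ (y, a)) x).det)
      = ∫ x in K, ψ x * vdiv (fun y => ∫ t in a..b,
          (Matrix.adjugate (Dmat (fun z => φ (z, t)) y)).mulVec
            (deriv (fun s => φ (y, s)) t)) x := by
  have hC : ContDiff ℝ 2 φ := by
    have e : φ = fun p => p.1 + ∑ k : Fin (m + 1), p.2 ^ (k : ℕ) • u k p.1 :=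
      funext fun p => hφ p.1 p.2
    rw [e]
    exact contDiff_fst.add (ContDiff.sum fun k _ =>
      (contDiff_snd.pow _).smul ((hu k).comp contDiff_fst))
  simp_rw [SCL.adjugate_mulVec_eq_flux hC, SCL.vdiv_integral_flux hC, SCL.det_Dmat hC]
end
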